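/- arXiv:1703.06489 — 2 statements merged into one kernel-verified Lean document; each statement's English description precedes it below -/
import Mathlib

section
/- With the lattice data as in the context, the cohomology class of ω is independent of the choice of section and alternating bicharacter: if s, s′ are two normalized sections of M → M/L and c₀, c₀′ are two alternating bicharacters on M each restricting to (α,β) ↦ (−1)^{B(α,β)} on L, and ω, ω′ are the corresponding 3-cocycles on A := M/L (ω(a,b,c) := (−1)^{B(s(c), d(a,b))}·c₀(s(c), d(a,b)) with d(a,b) := s(a)+s(b)−s(a+b), and similarly for ω′ using s′, c₀′), then there exists η : A × A → ℂˣ such that ω′(a,b,c)·ω(a,b,c)⁻¹ = η(b,c)·η(a,b+c)·η(a+b,c)⁻¹·η(a,b)⁻¹ for all a, b, c ∈ A. -/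
/-- An alternating bilinear map on a free module is the antisymmetrization of a bilinear map. -/
theorem exists_bilin_sub_flip_of_alternating {R V G ι : Type*} [CommRing R] [AddCommGroup V]
    [Module R V] [AddCommGroup G] [Module R G] (b : Module.Basis ι R V) (f : V →ₗ[R] V →ₗ[R] G)
    (hf : ∀ x, f x x = 0) : ∃ q : V →ₗ[R] V →ₗ[R] G, ∀ x y, f x y = q x y - q y x := by
  classical
  obtain ⟨_, _⟩ := exists_wellFoundedLT ι
  have hanti : ∀ x y, f y x = -f x y := fun x y => by
    have h := hf (x + y)
    simp only [map_add, LinearMap.add_apply, hf, zero_add, add_zero] at h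
    exact eq_neg_of_add_eq_zero_left h
  let q : V →ₗ[R] V →ₗ[R] G :=
    b.constr ℕ fun i => b.constr ℕ fun j => if i < j then f (b i) (b j) else 0
  have hq : ∀ i j, q (b i) (b j) = if i < j then f (b i) (b j) else 0 := fun i j => by
    simp [q, Module.Basis.constr_basis]
  have key : f = q - q.flip := by
    refine b.ext fun i => b.ext fun j => ?_
    simp only [LinearMap.sub_apply, LinearMap.flip_apply, hq]
    rcases lt_trichotomy i j with h | h | h
    · simp [h, h.not_gt]
    · subst h
      simp [hf]
    · simp [h, h.not_gt, hanti (b j) (b i)]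
  refine ⟨q, fun x y => ?_⟩
  rw [key]
  rfl

/-- On a free module, an alternating bilinear map into a `2`-divisible module is twice an
alternating bilinear map. -/
theorem exists_alternating_half {R V G ι : Type*} [CommRing R] [AddCommGroup V]
    [Module R V] [AddCommGroup G] [Module R G] (b : Module.Basis ι R V)
    (hG : ∀ g : G, ∃ h : G, h + h = g) (f : V →ₗ[R] V →ₗ[R] G) (hf : ∀ x, f x x = 0) :
    ∃ k : V →ₗ[R] V →ₗ[R] G, (∀ x, k x x = 0) ∧ ∀ x y, f x y = k x y + k x y := by
  obtain ⟨q, hq⟩ := exists_bilin_sub_flip_of_alternating b f hf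
  choose r hr using hG
  let v : V →ₗ[R] V →ₗ[R] G := b.constr ℕ fun i => b.constr ℕ fun j => r (q (b i) (b j))
  have hv : q = v + v := by
    refine b.ext fun i => b.ext fun j => ?_
    simp [v, Module.Basis.constr_basis, hr]
  refine ⟨v - v.flip, fun x => by simp, fun x y => ?_⟩
  rw [hq, hv]
  simp only [LinearMap.add_apply, LinearMap.sub_apply, LinearMap.flip_apply]
  abel

/-- An alternating form with values in a group of exponent `2` has a quadratic refinement. -/
theorem exists_quadratic_refinement {N G : Type*} [AddCommGroup N] [AddCommGroup G]
    (hG : ∀ g : G, 2 • g = 0) (k : N →+ N →+ G) (hk : ∀ x, k x x = 0) :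
    ∃ Q : N → G, ∀ x y, Q (x + y) = Q x + Q y + k x y := by
  let H : AddSubgroup N := (nsmulAddMonoidHom 2 : N →+ N).range
  have hH : ∀ x ∈ H, k x = 0 := by
    rintro _ ⟨x, rfl⟩
    ext y
    simp [hG]
  have hH' : ∀ x, ∀ y ∈ H, k x y = 0 := by
    rintro x _ ⟨y, rfl⟩
    simp [hG]
  let _ : Module (ZMod 2) (N ⧸ H) := QuotientAddGroup.zmodModule fun x => ⟨x, rfl⟩
  let _ : Module (ZMod 2) G := AddCommGroup.zmodModule hG
  let k₁ : N →+ (N ⧸ H) →+ G :=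
    { toFun := fun x => QuotientAddGroup.lift H (k x) (hH' x)
      map_zero' := by ext y; simp
      map_add' := fun x y => by
        ext z
        change k (x + y) z = k x z + k y z
        simp }
  let k₂ : (N ⧸ H) →+ (N ⧸ H) →+ G := QuotientAddGroup.lift H k₁ fun x hx => by
    ext y
    simp [k₁, hH x hx]
  let k₃ : (N ⧸ H) →ₗ[ZMod 2] (N ⧸ H) →ₗ[ZMod 2] G :=
    AddMonoidHom.toZModLinearMap 2
      { toFun := fun x => AddMonoidHom.toZModLinearMap 2 (k₂ x)
        map_zero' := by ext y; simp
        map_add' := fun x y => by ext z; simp }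
  have hk₃ : ∀ x y : N, k₃ (x : N ⧸ H) (y : N ⧸ H) = k x y := fun x y => rfl
  obtain ⟨q, hq⟩ := exists_bilin_sub_flip_of_alternating (Module.Basis.ofVectorSpace (ZMod 2) _) k₃
    fun x => QuotientAddGroup.induction_on x fun x => by rw [hk₃, hk]
  refine ⟨fun x => q x x, fun x y => ?_⟩
  have h := hG (q (y : N ⧸ H) (x : N ⧸ H))
  rw [← hk₃, hq]
  simp only [QuotientAddGroup.mk_add, map_add, LinearMap.add_apply]
  linear_combination (norm := module) h

/-- If `k` is an alternating form whose values on the failure of additivity of `s` have a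
quadratic refinement `Q` and are `2`-torsion, then `2 k(s c, s a + s b - s (a + b))` is a
coboundary. -/
theorem two_nsmul_cocycle_eq_coboundary {A F G : Type*} [AddCommGroup A] [AddCommGroup F]
    [AddCommGroup G] (k : F →+ F →+ G) (hk : ∀ x, k x x = 0) (K : AddSubgroup F)
    (hK : ∀ x ∈ K, ∀ y ∈ K, k x y + k x y = 0) (Q : F → G)
    (hQ : ∀ x ∈ K, ∀ y ∈ K, Q (x + y) = Q x + Q y + k x y)
    (s : A → F) (hs : ∀ a b, s a + s b - s (a + b) ∈ K) :
    ∃ η : A → A → G, ∀ a b c,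
      k (s c) (s a + s b - s (a + b)) + k (s c) (s a + s b - s (a + b)) =
        η b c + η a (b + c) - η (a + b) c - η a b := by
  have hanti : ∀ x y, k y x = -k x y := fun x y => by
    have h := hk (x + y)
    simp only [map_add, AddMonoidHom.add_apply, hk, zero_add, add_zero] at h
    exact eq_neg_of_add_eq_zero_left h
  refine ⟨fun a b => k (s b) (s a) + k (s (a + b)) (s a + s b - s (a + b)) +
    Q (s a + s b - s (a + b)), fun a b c => ?_⟩
  have h₁ := hQ _ (hs b c) _ (hs a (b + c))
  have h₂ := hQ _ (hs a b) _ (hs (a + b) c)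
  have h₃ := hK _ (hs a (b + c)) _ (hs b c)
  have h₅ := hK _ (hs (a + b) c) _ (hs a b)
  have h₄ : s b + s c - s (b + c) + (s a + s (b + c) - s (a + (b + c))) =
      s a + s b - s (a + b) + (s (a + b) + s c - s (a + b + c)) := by
    rw [add_assoc a b c]
    abel
  rw [h₄, h₂] at h₁
  rw [← add_assoc a b c] at h₁ h₃
  dsimp only
  rw [← add_assoc a b c]
  generalize s (a + b + c) = w at *
  generalize s (a + b) = u at *
  generalize s (b + c) = v at *
  generalize s a = x at *
  generalize s b = y at *
  generalize s c = z at *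
  generalize Q (x + y - u) = Q₁ at *
  generalize Q (u + z - w) = Q₂ at *
  generalize Q (y + z - v) = Q₃ at *
  generalize Q (x + v - w) = Q₄ at *
  simp only [map_add, map_sub, AddMonoidHom.add_apply, AddMonoidHom.sub_apply, hk,
    hanti x y, hanti x z, hanti x u, hanti x v, hanti x w, hanti y z, hanti y u, hanti y v,
    hanti y w, hanti z u, hanti z v, hanti z w, hanti u w,
    hanti v w] at h₁ h₃ h₅ ⊢
  linear_combination (norm := module) h₁ - h₃ + h₅

/-- An alternating form that vanishes on `L` gives rise to a trivial class in `H³(M/L, G)` if `G`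
is `2`-divisible. -/
theorem alternating_cocycle_eq_coboundary {M G : Type*} [AddCommGroup M] [AddCommGroup G]
    (hG : ∀ g : G, ∃ h : G, h + h = g) (L : AddSubgroup M) (f : M →+ M →+ G)
    (hf : ∀ x, f x x = 0) (hfL : ∀ x ∈ L, ∀ y ∈ L, f x y = 0)
    {A : Type*} [AddCommGroup A] (s : A → M) (hs : ∀ a b, s a + s b - s (a + b) ∈ L) :
    ∃ η : A → A → G, ∀ a b c, f (s c) (s a + s b - s (a + b)) =
        η b c + η a (b + c) - η (a + b) c - η a b := by
  let p : (M →₀ ℤ) →+ M := (Finsupp.linearCombination ℤ (id : M → M)).toAddMonoidHom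
  have hp : ∀ m, p (Finsupp.single m 1) = m := fun m => by simp [p]
  let g : (M →₀ ℤ) →ₗ[ℤ] (M →₀ ℤ) →ₗ[ℤ] G :=
    LinearMap.mk₂ ℤ (fun x y => f (p x) (p y)) (by simp) (by simp) (by simp) (by simp)
  have hg : ∀ x y, g x y = f (p x) (p y) := fun _ _ => rfl
  obtain ⟨k, hk, hgk⟩ := exists_alternating_half (Finsupp.basisSingleOne (R := ℤ) (ι := M)) hG g
    fun x => hf _
  let K : AddSubgroup (M →₀ ℤ) := L.comap p
  have hK : ∀ x ∈ K, ∀ y ∈ K, k x y + k x y = 0 := fun x hx y hy => by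
    rw [← hgk]
    exact hfL _ hx _ hy
  let T : AddSubgroup G := (nsmulAddMonoidHom 2 : G →+ G).ker
  let kT : K →+ K →+ T := AddMonoidHom.mk' (fun x => AddMonoidHom.mk'
      (fun y => ⟨k x y, by simpa [T, AddMonoidHom.mem_ker, two_nsmul] using hK x x.2 y y.2⟩)
      fun y z => by ext; simp) fun x y => by ext; simp
  obtain ⟨Q, hQ⟩ := exists_quadratic_refinement (fun t : T => by ext; exact t.2) kT
    fun x => by ext; exact hk x
  classical
  let k' : (M →₀ ℤ) →+ (M →₀ ℤ) →+ G := AddMonoidHom.mk' (fun x => (k x).toAddMonoidHom)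
    fun x y => by ext; simp
  obtain ⟨η, hη⟩ := two_nsmul_cocycle_eq_coboundary k' hk K hK
    (fun x => if hx : x ∈ K then (Q ⟨x, hx⟩ : G) else 0)
    (fun x hx y hy => by
      simp only [hx, hy, K.add_mem hx hy, dif_pos]
      exact congrArg Subtype.val (hQ ⟨x, hx⟩ ⟨y, hy⟩))
    (fun a => Finsupp.single (s a) 1) fun a b => by
      simpa only [K, AddSubgroup.mem_comap, map_add, map_sub, hp] using hs a b
  refine ⟨η, fun a b c => ?_⟩
  rw [← hη]
  refine Eq.trans ?_ (hgk _ _)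
  simp only [hg, map_add, map_sub, hp]


/-- The cohomology class of the lattice 3-cocycle `ω` is independent of the chosen
normalized section and alternating bicharacter: two such choices yield 3-cocycles
differing by the coboundary of a 2-cochain `η` on `A = M/L`. -/
theorem lattice_omega_class_independent_of_choices
    {M : Type*} [AddCommGroup M] (L : AddSubgroup M)
    (B : M → M → ℚ)
    (hBsymm : ∀ x y : M, B x y = B y x)
    (hBadd₁ : ∀ x y z : M, B (x + y) z = B x z + B y z)
    (hBadd₂ : ∀ x y z : M, B x (y + z) = B x y + B x z)
    (hBint : ∀ x : M, ∀ α ∈ L, ∃ n : ℤ, B x α = (n : ℚ))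
    (hBeven : ∀ α ∈ L, ∃ n : ℤ, B α α = 2 * (n : ℚ))
    (c₀ c₀' : M → M → ℂˣ)
    (hc₀add₁ : ∀ x y z : M, c₀ (x + y) z = c₀ x z * c₀ y z)
    (hc₀add₂ : ∀ x y z : M, c₀ x (y + z) = c₀ x y * c₀ x z)
    (hc₀alt : ∀ x : M, c₀ x x = 1)
    (hc₀L : ∀ α ∈ L, ∀ β ∈ L, ∀ n : ℤ, (n : ℚ) = B α β → c₀ α β = (-1 : ℂˣ) ^ n)
    (hc₀'add₁ : ∀ x y z : M, c₀' (x + y) z = c₀' x z * c₀' y z)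
    (hc₀'add₂ : ∀ x y z : M, c₀' x (y + z) = c₀' x y * c₀' x z)
    (hc₀'alt : ∀ x : M, c₀' x x = 1)
    (hc₀'L : ∀ α ∈ L, ∀ β ∈ L, ∀ n : ℤ, (n : ℚ) = B α β → c₀' α β = (-1 : ℂˣ) ^ n)
    (s s' : M ⧸ L → M)
    (hs : ∀ a : M ⧸ L, ((s a : M) : M ⧸ L) = a)
    (hs0 : s 0 = 0)
    (hs' : ∀ a : M ⧸ L, ((s' a : M) : M ⧸ L) = a)
    (hs'0 : s' 0 = 0)
    (ω ω' : (M ⧸ L) → (M ⧸ L) → (M ⧸ L) → ℂˣ)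
    (hω : ∀ a b c : M ⧸ L, ∀ n : ℤ,
      (n : ℚ) = B (s c) (s a + s b - s (a + b)) →
      ω a b c = (-1 : ℂˣ) ^ n * c₀ (s c) (s a + s b - s (a + b)))
    (hω' : ∀ a b c : M ⧸ L, ∀ n : ℤ,
      (n : ℚ) = B (s' c) (s' a + s' b - s' (a + b)) →
      ω' a b c = (-1 : ℂˣ) ^ n * c₀' (s' c) (s' a + s' b - s' (a + b))) :
    ∃ η : (M ⧸ L) → (M ⧸ L) → ℂˣ, ∀ a b c : M ⧸ L,
      ω' a b c * (ω a b c)⁻¹ =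
        η b c * η a (b + c) * (η (a + b) c)⁻¹ * (η a b)⁻¹ := by
  have hd : ∀ (t : M ⧸ L → M), (∀ a, ((t a : M) : M ⧸ L) = a) → ∀ a b,
      t a + t b - t (a + b) ∈ L := fun t ht a b => by
    rw [← QuotientAddGroup.eq_zero_iff]
    simp [ht]
  have ht : ∀ a, s' a - s a ∈ L := fun a => by
    rw [← QuotientAddGroup.eq_zero_iff]
    simp [hs, hs']
  have hfloor : ∀ x, ∀ α ∈ L, ((⌊B x α⌋ : ℤ) : ℚ) = B x α := fun x α hα => by
    obtain ⟨n, hn⟩ := hBint x α hα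
    simp [hn]
  -- the pairing `M × L → ℂˣ` through which `ω'` factors
  let e : M → M → ℂˣ := fun x y => (-1) ^ ⌊B x y⌋ * c₀' x y
  have he₁ : ∀ x y, ∀ α ∈ L, e (x + y) α = e x α * e y α := fun x y α hα => by
    have h : ⌊B (x + y) α⌋ = ⌊B x α⌋ + ⌊B y α⌋ := by
      have h := hBadd₁ x y α
      rw [← hfloor _ α hα, ← hfloor x α hα, ← hfloor y α hα] at h
      exact_mod_cast h
    simp only [e, h, zpow_add, hc₀'add₁]
    exact mul_mul_mul_comm _ _ _ _
  have he₂ : ∀ x, ∀ α ∈ L, ∀ β ∈ L, e x (α + β) = e x α * e x β := fun x α hα β hβ => by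
    have h : ⌊B x (α + β)⌋ = ⌊B x α⌋ + ⌊B x β⌋ := by
      have h := hBadd₂ x α β
      rw [← hfloor _ _ (L.add_mem hα hβ), ← hfloor x α hα, ← hfloor x β hβ] at h
      exact_mod_cast h
    simp only [e, h, zpow_add, hc₀'add₂]
    exact mul_mul_mul_comm _ _ _ _
  have heL : ∀ α ∈ L, ∀ β ∈ L, e α β = 1 := fun α hα β hβ => by
    simp only [e, hc₀'L α hα β hβ _ (hfloor α β hβ), ← mul_zpow]
    simp
  have he_coset : ∀ x y, x - y ∈ L → ∀ α ∈ L, e x α = e y α := fun x y hxy α hα => by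
    rw [← sub_add_cancel x y, he₁ _ _ α hα, heL _ hxy α hα, one_mul]
  -- the quotient of the two bicharacters, written additively
  let f : M →+ M →+ Additive ℂˣ := AddMonoidHom.mk' (fun x => AddMonoidHom.mk'
      (fun y => Additive.ofMul (c₀' x y / c₀ x y))
      fun y z => by rw [hc₀add₂, hc₀'add₂, mul_div_mul_comm, ofMul_mul])
    fun x y => by
      ext z
      simp [hc₀add₁, hc₀'add₁, mul_div_mul_comm]
  have hG : ∀ g : Additive ℂˣ, ∃ h : Additive ℂˣ, h + h = g := fun g => by
    obtain ⟨z, hz⟩ := IsAlgClosed.exists_pow_nat_eq (g.toMul : ℂ) two_pos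
    have hz0 : z ≠ 0 := by
      rintro rfl
      exact g.toMul.ne_zero (by simpa using hz.symm)
    refine ⟨Additive.ofMul (Units.mk0 z hz0), ?_⟩
    rw [← ofMul_mul, ← ofMul_toMul g]
    congr 1
    ext
    simpa [sq] using hz
  obtain ⟨θ, hθ⟩ := alternating_cocycle_eq_coboundary hG L f
    (fun x => by simp [f, hc₀alt, hc₀'alt])
    (fun x hx y hy => by
      simp [f, hc₀L x hx y hy _ (hfloor x y hy), hc₀'L x hx y hy _ (hfloor x y hy)])
    s (hd s hs)
  refine ⟨fun a b => (θ a b).toMul * e (s b) (s' a - s a), fun a b c => ?_⟩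
  have hθ' : c₀' (s c) (s a + s b - s (a + b)) / c₀ (s c) (s a + s b - s (a + b)) =
      (θ b c).toMul * (θ a (b + c)).toMul / (θ (a + b) c).toMul / (θ a b).toMul :=
    congrArg Additive.toMul (hθ a b c)
  rw [hω a b c _ (hfloor _ _ (hd s hs a b)), hω' a b c _ (hfloor _ _ (hd s' hs' a b))]
  change e (s' c) (s' a + s' b - s' (a + b)) * _ = _
  have h₁ : e (s' c) (s' a + s' b - s' (a + b)) = e (s c) (s' a + s' b - s' (a + b)) :=
    he_coset _ _ (ht c) _ (hd s' hs' a b)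
  have h₂ : e (s c) (s' a + s' b - s' (a + b)) * e (s c) (s' (a + b) - s (a + b)) =
      e (s c) (s a + s b - s (a + b)) * e (s c) (s' a - s a) * e (s c) (s' b - s b) := by
    rw [← he₂ _ _ (hd s' hs' a b) _ (ht _), ← he₂ _ _ (hd s hs a b) _ (ht _),
      ← he₂ _ _ (L.add_mem (hd s hs a b) (ht _)) _ (ht _)]
    congr 1
    abel
  have h₃ : e (s (b + c)) (s' a - s a) = e (s b) (s' a - s a) * e (s c) (s' a - s a) := by
    rw [← he₁ _ _ _ (ht a)]
    refine (he_coset _ _ (hd s hs b c) _ (ht a)).symm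
  have h₄ : e (s c) (s a + s b - s (a + b)) * ((-1) ^ ⌊B (s c) (s a + s b - s (a + b))⌋ *
      c₀ (s c) (s a + s b - s (a + b)))⁻¹ =
      (θ b c).toMul * (θ a (b + c)).toMul / (θ (a + b) c).toMul / (θ a b).toMul := by
    rw [← hθ', ← div_eq_mul_inv]
    exact mul_div_mul_left_eq_div _ _ _
  rw [h₁, eq_mul_inv_of_mul_eq h₂]
  rw [← div_eq_mul_inv, div_eq_iff_eq_mul] at h₄
  rw [h₄]
  dsimp only
  rw [h₃]
  generalize e (s c) (s' (a + b) - s (a + b)) = x₁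
  generalize (-1) ^ ⌊B (s c) (s a + s b - s (a + b))⌋ * c₀ (s c) (s a + s b - s (a + b)) = x₂
  ext
  push_cast
  field_simp
end

section
/- Let G be a finite group containing exactly one element of order 2, and let T be a Sylow 2-subgroup of G. Then the 2-primary component of the third group cohomology H³(G, ℂˣ) (with ℂˣ a trivial G-module), i.e. the subgroup of elements of 2-power order, is a cyclic group of order |T|. -/
/-- The transfer argument: `H` plays the cohomology of a group, `P` that of a Sylow subgroup and
`Z` that of a central subgroup of order two. -/
theorem isAddCyclic_primaryComponent_two_of_transfer {H P Z : Type*} [AddCommGroup H]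
    [AddCommGroup P] [AddCommGroup Z] [IsAddCyclic P] {n m : ℕ}
    (hP : Nat.card P = 2 ^ (n + 1)) (hm : Odd m) (hZ : ∀ z : Z, 2 • z = 0)
    (res : H →+ P) (tr : P →+ H) (resZ : P →+ Z) (trZ : Z →+ P)
    (h_tr_res : ∀ h, tr (res h) = m • h) (h_trZ_resZ : ∀ p, trZ (resZ p) = 2 ^ n • p)
    (h_resZ : ∀ p, resZ (res (tr p)) = m • resZ p) :
    IsAddCyclic (AddCommGroup.primaryComponent H 2) ∧
      Nat.card (AddCommGroup.primaryComponent H 2) = 2 ^ (n + 1) := by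
  obtain ⟨y, hy⟩ := IsAddCyclic.exists_generator (α := P)
  have hord : addOrderOf y = 2 ^ (n + 1) := by
    rw [addOrderOf_eq_card_of_forall_mem_zmultiples hy, hP]
  have hodd : ∀ z : Z, m • z = z := fun z => by
    obtain ⟨k, rfl⟩ := hm
    rw [add_smul, mul_comm, mul_smul, hZ, smul_zero, zero_add, one_smul]
  have hres_y : resZ y ≠ 0 := fun h => by
    have h1 : 2 ^ n • y = 0 := by rw [← h_trZ_resZ, h, map_zero]
    have := Nat.le_of_dvd (by positivity) (hord ▸ addOrderOf_dvd_of_nsmul_eq_zero h1)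
    exact absurd this (by rw [not_le]; exact Nat.pow_lt_pow_right (by norm_num) (by lia))
  have hPzero : ∀ p : P, 2 ^ (n + 1) • p = 0 := fun p => by
    rw [← hP]; exact card_nsmul_eq_zero'
  let f : AddCommGroup.primaryComponent H 2 →+ P :=
    res.comp (AddCommGroup.primaryComponent H 2).subtype
  have hinj : Function.Injective f := by
    rw [injective_iff_map_eq_zero]
    rintro ⟨h, hh⟩ h0
    obtain ⟨k, hk⟩ := hh
    have h1 : m • h = 0 := by
      rw [← h_tr_res]
      exact (congrArg tr h0).trans (map_zero tr)
    have hcop : Nat.Coprime (2 ^ k) m := (Nat.coprime_two_left.2 hm).pow_left k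
    have := Nat.dvd_gcd (addOrderOf_dvd_of_nsmul_eq_zero hk) (addOrderOf_dvd_of_nsmul_eq_zero h1)
    rw [hcop, Nat.dvd_one, AddMonoid.addOrderOf_eq_one_iff] at this
    exact Subtype.ext this
  have hx : m • tr y ∈ AddCommGroup.primaryComponent H 2 :=
    ⟨n + 1, by rw [← h_tr_res, ← map_nsmul, hPzero, map_zero]⟩
  have hgen : ∀ p, p ∈ AddSubgroup.zmultiples (f ⟨_, hx⟩) := by
    obtain ⟨k, hk : k • y = f ⟨_, hx⟩⟩ := hy (f ⟨_, hx⟩)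
    have hZx : resZ (f ⟨_, hx⟩) = resZ y := by
      change resZ (res (m • tr y)) = _
      rw [map_nsmul, map_nsmul, h_resZ, hodd, hodd]
    have hk_odd : ¬ (2 : ℤ) ∣ k := by
      rintro ⟨l, rfl⟩
      apply hres_y
      rw [← hZx, ← hk, mul_smul, map_zsmul]
      exact_mod_cast hZ _
    have hcop : IsCoprime k ((2 : ℤ) ^ (n + 1)) :=
      (((Int.prime_two.coprime_iff_not_dvd).2 hk_odd).symm).pow_right
    obtain ⟨a, b, hab⟩ := hcop
    have hy_mem : y ∈ AddSubgroup.zmultiples (f ⟨_, hx⟩) := by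
      refine ⟨a, ?_⟩
      have : (a * k + b * 2 ^ (n + 1)) • y = y := by rw [hab, one_smul]
      rw [add_smul, mul_smul, mul_smul, hk] at this
      have h0 : ((2 : ℤ) ^ (n + 1)) • y = 0 := by exact_mod_cast hPzero y
      rw [h0, smul_zero, add_zero] at this
      exact this
    intro p
    exact (AddSubgroup.zmultiples_le_of_mem hy_mem) (hy p)
  have hsurj : Function.Surjective f := fun p => by
    obtain ⟨k, hk⟩ := hgen p
    exact ⟨k • ⟨_, hx⟩, by rw [map_zsmul]; exact hk⟩
  let e := AddEquiv.ofBijective f ⟨hinj, hsurj⟩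
  exact ⟨isAddCyclic_of_surjective e.symm e.symm.surjective, by
    rw [Nat.card_congr e.toEquiv, hP]⟩

/-- A nontrivial normal subgroup of a finite `p`-group contains a central element of order `p`. -/
theorem IsPGroup.exists_mem_center_orderOf_eq {p : ℕ} [hp : Fact p.Prime] {G : Type*} [Group G]
    [Finite G] (hG : IsPGroup p G) {N : Subgroup G} [N.Normal] (hN : N ≠ ⊥) :
    ∃ c ∈ N, c ∈ Subgroup.center G ∧ orderOf c = p := by
  have hdvd : p ∣ Nat.card N := by
    have : Nontrivial N := (Subgroup.nontrivial_iff_ne_bot N).2 hN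
    obtain ⟨n, hn0, hn⟩ := (hG.to_subgroup N).nontrivial_iff_card.1 inferInstance
    exact hn ▸ dvd_pow_self _ hn0.ne'
  obtain ⟨b, hb, hb1⟩ := (hG.of_equiv
    ConjAct.toConjAct).exists_fixed_point_of_prime_dvd_card_of_fixed_point N hdvd
    (a := 1) (fun g => smul_one g)
  have hbc : (b : G) ∈ Subgroup.center G := by
    rw [Subgroup.mem_center_iff]
    intro g
    have := congrArg Subtype.val (hb (ConjAct.toConjAct g))
    rw [ConjAct.Subgroup.val_conj_smul, ConjAct.toConjAct_smul] at this
    exact mul_inv_eq_iff_eq_mul.1 this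
  obtain ⟨k, hk⟩ := (IsPGroup.iff_orderOf.1 hG) (b : G)
  have hk0 : k ≠ 0 := by
    rintro rfl
    rw [pow_zero, orderOf_eq_one_iff] at hk
    exact hb1 (Subtype.ext hk.symm)
  obtain ⟨j, rfl⟩ := Nat.exists_eq_succ_of_ne_zero hk0
  refine ⟨(b : G) ^ p ^ j, N.pow_mem b.2 _, Subgroup.pow_mem _ hbc _, ?_⟩
  rw [orderOf_pow_of_dvd (pow_ne_zero _ hp.out.ne_zero) (hk ▸ pow_dvd_pow p j.le_succ), hk,
    Nat.pow_div j.le_succ hp.out.pos]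
  simp

/-- In a finite `p`-group, if the centralizer of a cyclic normal subgroup `A` is larger than `A`,
then it contains an element outside `A` which has its `p`-th power in `A` and is central
modulo `A`. -/
theorem IsPGroup.exists_commute_pow_mem_of_not_mem {p : ℕ} [hp : Fact p.Prime] {G : Type*}
    [Group G] [Finite G] (hG : IsPGroup p G) (x : G) [hA : (Subgroup.zpowers x).Normal] {g : G}
    (hg : g ∉ Subgroup.zpowers x) (hgx : Commute g x) :
    ∃ u, u ∉ Subgroup.zpowers x ∧ Commute u x ∧ u ^ p ∈ Subgroup.zpowers x ∧
      ∀ h : G, h * u * h⁻¹ * u⁻¹ ∈ Subgroup.zpowers x := by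
  let A := Subgroup.zpowers x
  let π := QuotientGroup.mk' A
  have hker : ∀ a, π a = 1 ↔ a ∈ A := fun a => QuotientGroup.eq_one_iff a
  let C := Subgroup.centralizer (A : Set G)
  have hC : ∀ c, c ∈ C ↔ Commute c x := by
    intro c
    rw [Subgroup.mem_centralizer_iff]
    constructor
    · intro h
      exact (h x (Subgroup.mem_zpowers x)).symm
    · rintro h _ ⟨k, rfl⟩
      exact (h.zpow_right k).symm.eq
  have : (C.map π).Normal := Subgroup.Normal.map inferInstance π (QuotientGroup.mk'_surjective A)
  have hne : C.map π ≠ ⊥ := by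
    intro h
    have : π g ∈ C.map π := Subgroup.mem_map_of_mem π ((hC g).2 hgx)
    rw [h, Subgroup.mem_bot, hker] at this
    exact hg this
  obtain ⟨c, ⟨u, hu, rfl⟩, hcc, hcp⟩ := (hG.to_quotient A).exists_mem_center_orderOf_eq hne
  refine ⟨u, fun h => ?_, (hC u).1 hu, ?_, fun h => ?_⟩
  · rw [(hker u).2 h, orderOf_one] at hcp
    exact hp.out.one_lt.ne hcp
  · exact (hker _).1 (by rw [map_pow, ← hcp, pow_orderOf_eq_one])
  · refine (hker _).1 ?_
    have := Subgroup.mem_center_iff.1 hcc (π h)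
    rw [map_mul, map_mul, map_mul, this, map_inv, map_inv]
    group

/-- If `t` normalizes `⟨x⟩` and has its square in `⟨x⟩`, but no element of `t⟨x⟩` has square `1`,
then either `t` generates a larger cyclic subgroup, or `t` inverts `x` and `t ^ 2` is the
involution of `⟨x⟩`. -/
theorem mem_zpowers_or_of_sq_mem {G : Type*} [Group G] {x t : G} {k : ℕ}
    (hx : orderOf x = 2 ^ (k + 1)) {r : ℤ} (hr : t * x * t⁻¹ = x ^ r)
    (hsq : t ^ 2 ∈ Subgroup.zpowers x) (hne : ∀ j : ℤ, (t * x ^ j) ^ 2 ≠ 1) :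
    x ∈ Subgroup.zpowers t ∨ (1 ≤ k ∧ t * x * t⁻¹ = x⁻¹ ∧ t ^ 2 = x ^ 2 ^ k) := by
  have hconj : ∀ j : ℤ, t * x ^ j * t⁻¹ = x ^ (r * j) := fun j => by
    rw [← conj_zpow, hr, zpow_mul]
  have hx' : (orderOf x : ℤ) = 2 * 2 ^ k := by rw [hx]; push_cast; ring
  have hone : ∀ j : ℤ, x ^ j = 1 ↔ (2 * 2 ^ k : ℤ) ∣ j := fun j => by
    rw [← orderOf_dvd_iff_zpow_eq_one, hx']
  have heq : ∀ i j : ℤ, x ^ i = x ^ j ↔ (2 * 2 ^ k : ℤ) ∣ i - j := fun i j => by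
    rw [← hone, zpow_sub, mul_inv_eq_one]
  obtain ⟨s, hs⟩ := hsq
  simp only at hs
  have hne' : ∀ j : ℤ, ¬ (2 * 2 ^ k : ℤ) ∣ (r + 1) * j + s := by
    intro j hj
    apply hne j
    have : (t * x ^ j) ^ 2 = (t * x ^ j * t⁻¹) * t ^ 2 * x ^ j := by rw [pow_two, pow_two]; group
    rw [this, hconj, ← hs, ← zpow_add, ← zpow_add, hone]
    convert hj using 1
    ring
  by_cases hs_even : Even s
  swap
  · left
    have hcop : IsCoprime s (2 * 2 ^ k : ℤ) := by
      have h2 : ¬ (2 : ℤ) ∣ s := fun h => hs_even (even_iff_two_dvd.2 h)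
      have := ((Int.prime_two.coprime_iff_not_dvd).2 h2).symm
      exact this.mul_right this.pow_right
    obtain ⟨a, b, hab⟩ := hcop
    refine ⟨2 * a, ?_⟩
    have : x ^ (s * a) = x ^ (1 : ℤ) := by
      rw [heq]
      exact ⟨-b, by linear_combination hab⟩
    rw [zpow_one, zpow_mul, hs] at this
    simp only
    rw [zpow_mul]
    exact_mod_cast this
  right
  have hrr : (2 * 2 ^ k : ℤ) ∣ r * r - 1 := by
    rw [← heq, zpow_one, ← hconj, ← hr]
    have : t * (t * x * t⁻¹) * t⁻¹ = t ^ 2 * x * (t ^ 2)⁻¹ := by rw [pow_two]; group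
    rw [this, ← hs]
    exact (Commute.zpow_self x s).mul_inv_cancel
  have hsr : (2 * 2 ^ k : ℤ) ∣ (r - 1) * s := by
    have : x ^ (r * s) = x ^ s := by
      rw [← hconj, hs]; group
    rw [heq] at this
    convert this using 1
    ring
  have hr_odd : Odd r := by
    rw [← Int.not_even_iff_odd]
    rintro ⟨q, rfl⟩
    have := (Dvd.intro _ rfl : (2 : ℤ) ∣ 2 * 2 ^ k).trans hrr
    have h2 : (2 : ℤ) ∣ (q + q) * (q + q) := ⟨q * (q + q), by ring⟩
    have := (Int.dvd_iff_dvd_of_dvd_sub this).1 h2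
    norm_num at this
  obtain ⟨σ, hσ⟩ := hs_even
  obtain ⟨q, hq⟩ := hr_odd
  have hpos : (2 : ℤ) ^ k ≠ 0 := by positivity
  have hcopr : ∀ m : ℤ, Odd m → IsCoprime ((2 : ℤ) ^ k) m := fun m hm =>
    ((Int.prime_two.coprime_iff_not_dvd).2
      (fun h => (Int.not_even_iff_odd.2 hm) (even_iff_two_dvd.2 h))).pow_left
  rcases Int.even_or_odd q with hq_even | hq_odd
  · exfalso
    obtain ⟨a, b, hab⟩ := hcopr (q + 1) hq_even.add_one
    refine hne' (-(b * σ)) ⟨a * σ, ?_⟩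
    subst hσ hq
    linear_combination (-2 * σ) * hab
  · have hcop := hcopr q hq_odd
    have h1 : (2 : ℤ) ^ k ∣ r + 1 := by
      obtain ⟨c, hc⟩ := hrr
      refine hcop.dvd_of_dvd_mul_left ⟨c, ?_⟩
      subst hq
      refine mul_left_cancel₀ (two_ne_zero (α := ℤ)) ?_
      linear_combination hc
    have h2 : (2 : ℤ) ^ k ∣ s := by
      obtain ⟨c, hc⟩ := hsr
      refine hcop.dvd_of_dvd_mul_left ⟨c, ?_⟩
      subst hq
      refine mul_left_cancel₀ (two_ne_zero (α := ℤ)) ?_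
      linear_combination hc
    obtain ⟨α, hα⟩ := h1
    obtain ⟨β, hβ⟩ := h2
    have hβ_odd : Odd β := by
      rw [← Int.not_even_iff_odd]
      rintro ⟨c, rfl⟩
      exact hne' 0 ⟨c, by rw [hβ]; ring⟩
    have hα_even : Even α := by
      rw [← Int.not_odd_iff_even]
      intro hα_odd
      obtain ⟨c, hc⟩ := hα_odd.add_odd hβ_odd
      exact hne' 1 ⟨c, by linear_combination hα + hβ + 2 ^ k * hc⟩
    refine ⟨?_, ?_, ?_⟩
    · rw [Nat.one_le_iff_ne_zero]
      rintro rfl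
      rw [pow_zero, one_mul] at hβ
      exact (Int.not_even_iff_odd.2 hβ_odd) ⟨σ, by rw [← hβ, hσ]⟩
    · rw [hr, ← zpow_neg_one, heq]
      obtain ⟨c, rfl⟩ := hα_even
      exact ⟨c, by linear_combination hα⟩
    · have : x ^ ((2 ^ k : ℕ) : ℤ) = x ^ 2 ^ k := zpow_natCast x (2 ^ k)
      rw [← hs, ← this, heq]
      obtain ⟨c, rfl⟩ := hβ_odd
      exact ⟨c, by push_cast; linear_combination hβ⟩

/-- A finite `2`-group with a unique involution is cyclic or generalized quaternion. -/
theorem IsPGroup.isCyclic_or_quaternion {T : Type*} [Group T] [Finite T] (hT : IsPGroup 2 T)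
    (huniq : ∃! g : T, orderOf g = 2) :
    IsCyclic T ∨ ∃ (x y : T) (n : ℕ), orderOf x = 2 * n ∧ x ^ n = y ^ 2 ∧ x * y * x = y ∧
      y ∉ Subgroup.zpowers x ∧ ∀ g, g ∈ Subgroup.zpowers x ∨ y⁻¹ * g ∈ Subgroup.zpowers x := by
  obtain ⟨z, hz, hz_uniq⟩ := huniq
  have hz_sq : ∀ g : T, g ^ 2 = 1 → g = 1 ∨ g = z := fun g hg => by
    by_cases h : g = 1
    · exact .inl h
    · exact .inr (hz_uniq g (orderOf_eq_prime hg h))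
  have hz_normal : (Subgroup.zpowers z).Normal := by
    refine ⟨fun a ha g => ?_⟩
    obtain ⟨k, rfl⟩ := ha
    have : g * z * g⁻¹ = z := hz_uniq _ (by
      beta_reduce
      rw [← MulAut.conj_apply, MulEquiv.orderOf_eq]; exact hz)
    rw [← conj_zpow, this]
    exact ⟨k, rfl⟩
  obtain ⟨x, hx_normal, hx_max⟩ := Set.exists_max_image
    {x : T | (Subgroup.zpowers x).Normal} orderOf (Set.toFinite _) ⟨z, hz_normal⟩
  have hx_max' : ∀ u, (Subgroup.zpowers u).Normal → x ∈ Subgroup.zpowers u →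
      u ∈ Subgroup.zpowers x := fun u hu hxu => by
    have hle := Subgroup.zpowers_le.2 hxu
    have := Subgroup.eq_of_le_of_card_ge hle (by
      rw [Nat.card_zpowers, Nat.card_zpowers]; exact hx_max u hu)
    rw [this]
    exact Subgroup.mem_zpowers u
  obtain ⟨k', hk'⟩ := (IsPGroup.iff_orderOf.1 hT) x
  have h2le : 2 ≤ orderOf x := hz ▸ hx_max z hz_normal
  obtain ⟨k, rfl⟩ : ∃ k, k' = k + 1 := Nat.exists_eq_succ_of_ne_zero (by
    rintro rfl; rw [hk'] at h2le; norm_num at h2le)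
  have hz_mem : z ∈ Subgroup.zpowers x := by
    have : x ^ 2 ^ k = z := hz_uniq _ (by
      beta_reduce
      rw [orderOf_pow_of_dvd (by positivity) (hk' ▸ pow_dvd_pow 2 k.le_succ), hk',
        Nat.pow_div k.le_succ two_pos]
      simp)
    exact ⟨(2 ^ k : ℕ), by simp only [zpow_natCast, this]⟩
  have hsq_ne : ∀ t, t ∉ Subgroup.zpowers x → ∀ j : ℤ, (t * x ^ j) ^ 2 ≠ 1 := by
    intro t ht j h
    apply ht
    have hmem : t * x ^ j ∈ Subgroup.zpowers x := by
      rcases hz_sq _ h with h | h <;> rw [h]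
      exacts [one_mem _, hz_mem]
    exact (Subgroup.mul_mem_cancel_right _ (Subgroup.zpow_mem_zpowers x j)).1 hmem
  have hconj : ∀ g : T, ∃ r : ℤ, g * x * g⁻¹ = x ^ r := fun g => by
    obtain ⟨r, hr⟩ := hx_normal.conj_mem x (Subgroup.mem_zpowers x) g
    exact ⟨r, hr.symm⟩
  have hcent : ∀ g, Commute g x → g ∈ Subgroup.zpowers x := by
    intro g hgx
    by_contra hg
    have : (Subgroup.zpowers x).Normal := hx_normal
    obtain ⟨u, hu, hux, hu2, huc⟩ := hT.exists_commute_pow_mem_of_not_mem x hg hgx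
    rcases mem_zpowers_or_of_sq_mem (r := 1) hk' (by rw [hux.mul_inv_cancel, zpow_one]) hu2
      (hsq_ne u hu) with hxu | ⟨hk, hinv, hsq⟩
    · refine hu (hx_max' u ⟨fun a ha h => ?_⟩ hxu)
      obtain ⟨j, rfl⟩ := ha
      rw [← conj_zpow]
      refine Subgroup.zpow_mem _ ?_ j
      refine (Subgroup.mul_mem_cancel_right _ (inv_mem (Subgroup.mem_zpowers u))).1 ?_
      exact Subgroup.zpowers_le.2 hxu (huc h)
    · rw [hux.mul_inv_cancel, eq_inv_iff_mul_eq_one, ← pow_two] at hinv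
      have := Nat.le_of_dvd two_pos (hk' ▸ orderOf_dvd_of_pow_eq_one hinv)
      have h4 : 2 ^ 2 ≤ 2 ^ (k + 1) := Nat.pow_le_pow_right two_pos (by lia)
      lia
  have hmain : ∀ g, g ∉ Subgroup.zpowers x →
      g * x * g⁻¹ = x⁻¹ ∧ g ^ 2 = x ^ 2 ^ k := by
    intro g hg
    have hex : ∃ j : ℕ, g ^ 2 ^ j ∈ Subgroup.zpowers x := by
      obtain ⟨j, hj⟩ := (IsPGroup.iff_orderOf.1 hT) g
      exact ⟨j, by rw [← hj, pow_orderOf_eq_one]; exact one_mem _⟩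
    classical
    obtain ⟨j, hj⟩ := Nat.exists_eq_succ_of_ne_zero (n := Nat.find hex) (by
      intro h
      have := Nat.find_spec hex
      rw [h, pow_zero, pow_one] at this
      exact hg this)
    have hjmem : g ^ 2 ^ (j + 1) ∈ Subgroup.zpowers x := by
      have := Nat.find_spec hex
      rwa [hj] at this
    have hjnot : g ^ 2 ^ j ∉ Subgroup.zpowers x := Nat.find_min hex (by lia)
    rw [pow_succ, pow_mul] at hjmem
    obtain ⟨r, hr⟩ := hconj (g ^ 2 ^ j)
    rcases mem_zpowers_or_of_sq_mem hk' hr hjmem (hsq_ne _ hjnot) with h | ⟨hk, hinv, hsq⟩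
    · obtain ⟨i, hi⟩ := h
      refine absurd (hcent _ ?_) hjnot
      rw [← hi]
      exact Commute.self_zpow _ i
    rcases Nat.eq_zero_or_pos j with rfl | hj0
    · rw [pow_zero, pow_one] at hinv hsq
      exact ⟨hinv, hsq⟩
    obtain ⟨i, rfl⟩ := Nat.exists_eq_succ_of_ne_zero hj0.ne'
    exfalso
    obtain ⟨q, hq⟩ := hconj (g ^ 2 ^ i)
    have h1 : x ^ (q * q) = x⁻¹ := by
      rw [zpow_mul, ← hq, conj_zpow, ← hq, ← hinv, Nat.succ_eq_add_one, pow_succ, pow_mul, pow_two]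
      group
    rw [← zpow_neg_one, ← mul_inv_eq_one, ← zpow_neg, ← zpow_add, ← orderOf_dvd_iff_zpow_eq_one,
      hk'] at h1
    have h4 : (4 : ℤ) ∣ q * q + 1 := by
      refine dvd_trans ?_ h1
      obtain ⟨l, rfl⟩ := Nat.exists_eq_add_of_le hk
      exact ⟨2 ^ l, by push_cast; ring⟩
    rcases Int.even_or_odd q with ⟨m, rfl⟩ | ⟨m, rfl⟩
    · have : (4 : ℤ) ∣ 1 := (Int.dvd_add_right ⟨m * m, by ring⟩).1 h4
      norm_num at this
    · have : (4 : ℤ) ∣ 2 :=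
        (Int.dvd_add_right (dvd_mul_right 4 (m * m + m))).1 (by convert h4 using 1; ring)
      norm_num at this
  by_cases hall : ∀ g, g ∈ Subgroup.zpowers x
  · exact .inl ⟨x, hall⟩
  · right
    push Not at hall
    obtain ⟨y, hy⟩ := hall
    obtain ⟨hyx, hy2⟩ := hmain y hy
    refine ⟨x, y, 2 ^ k, by rw [hk', pow_succ'], hy2.symm, ?_, hy, fun g => ?_⟩
    · rw [mul_assoc, mul_inv_eq_iff_eq_mul.1 hyx, mul_inv_cancel_left]
    · by_contra! hg
      apply hg.2
      have hgx := (hmain g hg.1).1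
      refine hcent _ ?_
      have h1 : y⁻¹ * x⁻¹ * y = x := by rw [← hyx]; group
      have h2 : (y⁻¹ * g) * x * (y⁻¹ * g)⁻¹ = x := by
        calc _ = y⁻¹ * (g * x * g⁻¹) * y := by group
          _ = x := by rw [hgx, h1]
      exact mul_inv_eq_iff_eq_mul.1 h2

section Quaternion

open Finset

variable {R M : Type*} [Ring R] [AddCommGroup M] [Module R M] {X Y E F : R} {n : ℕ}

theorem pow_mul_mul_pow_of_mul_mul (hXY : X * Y * X = Y) (i : ℕ) : X ^ i * Y * X ^ i = Y := by
  induction i with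
  | zero => simp
  | succ i ih =>
    calc X ^ (i + 1) * Y * X ^ (i + 1) = X ^ i * X * Y * (X * X ^ i) := by
          rw [← pow_succ, ← pow_succ']
      _ = X ^ i * (X * Y * X) * X ^ i := by simp only [mul_assoc]
      _ = Y := by rw [hXY, ih]

theorem commute_pow_of_sq_eq (hY : Y * Y = X ^ n) : X ^ n * Y = Y * X ^ n := by
  rw [← hY, mul_assoc]

theorem geom_sum_mul_mul_of_mul_mul (hXY : X * Y * X = Y) (hX : X ^ n * X ^ n = 1) :
    (∑ i ∈ range n, X ^ i) * (X * Y) = Y * (X ^ n * ∑ i ∈ range n, X ^ i) := by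
  rw [← sum_range_reflect (fun i => X ^ i) n, sum_mul, mul_sum, mul_sum,
    ← sum_range_reflect (fun i => Y * (X ^ n * X ^ (n - 1 - i))) n]
  refine sum_congr rfl fun i hi => ?_
  rw [mem_range] at hi
  have h1 : n - 1 - i + 1 + i = n := by lia
  have h2 : n - 1 - (n - 1 - i) = i := by lia
  rw [h2]
  calc X ^ (n - 1 - i) * (X * Y) = X ^ (n - 1 - i + 1) * Y := by rw [pow_succ, mul_assoc]
    _ = X ^ (n - 1 - i + 1) * Y * (X ^ n * X ^ n) := by rw [hX, mul_one]
    _ = X ^ (n - 1 - i + 1) * Y * (X ^ (n - 1 - i + 1) * X ^ i * X ^ n) := by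
      rw [← pow_add X (n - 1 - i + 1) i, h1]
    _ = X ^ (n - 1 - i + 1) * Y * X ^ (n - 1 - i + 1) * (X ^ i * X ^ n) := by simp only [mul_assoc]
    _ = Y * (X ^ n * X ^ i) := by
      rw [pow_mul_mul_pow_of_mul_mul hXY, ← pow_add, ← pow_add, add_comm]

/-- The norm of the cyclic group generated by `X` commutes with `Y`, up to `X`. -/
theorem norm_mul_mul (hXY : X * Y * X = Y) (hY : Y * Y = X ^ n) (hX : X ^ n * X ^ n = 1) :
    (1 + X ^ n) * (∑ i ∈ range n, X ^ i) * (X * Y) =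
      Y * ((1 + X ^ n) * ∑ i ∈ range n, X ^ i) := by
  rw [mul_assoc, geom_sum_mul_mul_of_mul_mul hXY hX, ← mul_assoc, add_mul, one_mul,
    commute_pow_of_sq_eq hY, ← mul_one_add, mul_assoc, ← mul_assoc _ (X ^ n), add_mul, hX, one_mul,
    add_comm]

theorem norm_mul_self (hX : X ^ n * X ^ n = 1) :
    (1 + X ^ n) * (∑ i ∈ range n, X ^ i) * X = (1 + X ^ n) * ∑ i ∈ range n, X ^ i := by
  rw [← sub_eq_zero, ← mul_sub_one, mul_assoc, geom_sum_mul]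
  simp only [mul_sub, add_mul, hX, one_mul, mul_one]
  abel

theorem self_mul_norm (hX : X ^ n * X ^ n = 1) :
    X * ((1 + X ^ n) * ∑ i ∈ range n, X ^ i) = (1 + X ^ n) * ∑ i ∈ range n, X ^ i := by
  have h : (1 + X ^ n) * (∑ i ∈ range n, X ^ i) = (∑ i ∈ range n, X ^ i) * (1 + X ^ n) := by
    refine Commute.sum_right _ _ _ fun i _ => ?_
    exact ((Commute.one_left X).add_left (Commute.pow_self X n)).pow_right i
  rw [← sub_eq_zero, ← sub_one_mul, h, ← mul_assoc, mul_geom_sum]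
  simp only [sub_mul, mul_add, hX, one_mul, mul_one]
  abel

theorem norm_mul_of_mul_mul (hXY : X * Y * X = Y) (hY : Y * Y = X ^ n) (hX : X ^ n * X ^ n = 1) :
    (1 + X ^ n) * (∑ i ∈ range n, X ^ i) * Y =
      Y * ((1 + X ^ n) * ∑ i ∈ range n, X ^ i) := by
  rw [← norm_mul_mul hXY hY hX, ← mul_assoc, norm_mul_self hX]

theorem norm_eq_sum : (1 + X ^ n) * (∑ i ∈ range n, X ^ i) = ∑ i ∈ range (2 * n), X ^ i := by
  rw [two_mul, sum_range_add, add_mul, one_mul, mul_sum]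
  simp only [pow_add]

theorem exists_sub_one_smul_of_norm_smul_eq_zero (hX : X ^ n * X ^ n = 1)
    (hE : ∑ i ∈ range (2 * n), X ^ i * E * X ^ (2 * n - i) = 1) {m : M}
    (hm : ((1 + X ^ n) * ∑ i ∈ range n, X ^ i) • m = 0) : ∃ m', m = (X - 1) • m' := by
  have h0 : (∑ i ∈ range (2 * n), X ^ (2 * n - i)) • m = 0 := by
    have : ∑ i ∈ range (2 * n), X ^ (2 * n - i) = (1 + X ^ n) * ∑ i ∈ range n, X ^ i := by
      rw [← norm_mul_self hX, norm_eq_sum, ← sum_range_reflect (fun i => X ^ i), sum_mul]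
      refine sum_congr rfl fun i hi => ?_
      rw [mem_range] at hi
      rw [← pow_succ]
      congr 1
      lia
    rw [this, hm]
  refine ⟨(∑ i ∈ range (2 * n), (∑ j ∈ range i, X ^ j) * E * X ^ (2 * n - i)) • m, ?_⟩
  conv_lhs => rw [← one_smul R m, ← hE, ← sub_zero ((∑ i ∈ range (2 * n), _) • m),
    ← smul_zero E, ← h0, ← mul_smul, ← sub_smul, mul_sum, ← sum_sub_distrib]
  rw [← mul_smul, mul_sum]
  congr 1
  refine sum_congr rfl fun i _ => ?_
  rw [← mul_assoc, ← mul_assoc, mul_geom_sum, sub_mul, sub_mul, one_mul]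

theorem exists_norm_smul_of_smul_eq (hE : ∑ i ∈ range (2 * n), X ^ i * E * X ^ (2 * n - i) = 1)
    {m : M} (hm : X • m = m) : ∃ m', m = ((1 + X ^ n) * ∑ i ∈ range n, X ^ i) • m' := by
  have hp : ∀ i : ℕ, X ^ i • m = m := fun i => by
    induction i with
    | zero => simp
    | succ i ih => rw [pow_succ, mul_smul, hm, ih]
  refine ⟨E • m, ?_⟩
  conv_lhs => rw [← one_smul R m, ← hE]
  rw [norm_eq_sum, sum_smul, sum_smul]
  exact sum_congr rfl fun i _ => by rw [mul_smul, mul_smul, hp]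

theorem exists_sub_one_smul_of_smul_eq_neg (hFX : F * X = X * F) (hFY : F * Y + Y * F = Y)
    {m : M} (hX : X • m = m) (hm : Y • m = -m) : ∃ m', X • m' = m' ∧ m = (Y - 1) • m' := by
  refine ⟨-(F • m), by rw [smul_neg, ← mul_smul, ← hFX, mul_smul, hX], ?_⟩
  have h := congrArg (fun r : R => r • m) hFY
  simp only [add_smul, mul_smul, hm, smul_neg] at h
  rw [sub_smul, one_smul, smul_neg, sub_neg_eq_add, ← neg_inj, ← h]
  abel

theorem exists_add_one_smul_of_smul_eq (hFX : F * X = X * F) (hFY : F * Y + Y * F = Y)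
    {m : M} (hX : X • m = m) (hm : Y • m = m) : ∃ m', X • m' = m' ∧ m = (Y + 1) • m' := by
  refine ⟨F • m, by rw [← mul_smul, ← hFX, mul_smul, hX], ?_⟩
  have h := congrArg (fun r : R => r • m) hFY
  simp only [add_smul, mul_smul, hm] at h
  rw [add_smul, one_smul, add_comm, h]

theorem quaternion_comp_one (hXY : X * Y * X = Y) (hY : Y * Y = X ^ n) (f : M) :
    (∑ i ∈ range n, X ^ i) • (X - 1) • f - (Y + 1) • (Y - 1) • f = 0 ∧
      (X * Y + 1) • (X - 1) • f + (X - 1) • (Y - 1) • f = 0 := by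
  simp only [← mul_smul, ← sub_smul, ← add_smul, geom_sum_mul]
  constructor
  · convert zero_smul R f
    rw [← hY]; noncomm_ring
  · convert zero_smul R f
    simp only [add_mul, mul_sub, hXY, sub_mul, one_mul, mul_one]; abel

theorem quaternion_comp_two (hXY : X * Y * X = Y) (hY : Y * Y = X ^ n) (b b' : M) :
    (X - 1) • ((∑ i ∈ range n, X ^ i) • b - (Y + 1) • b') -
      (X * Y - 1) • ((X * Y + 1) • b + (X - 1) • b') = 0 := by
  have h₁ : (X - 1) * (∑ i ∈ range n, X ^ i) - (X * Y - 1) * (X * Y + 1) = 0 := by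
    have : X * Y * (X * Y) = Y * Y := by rw [← mul_assoc, hXY]
    rw [mul_geom_sum, ← hY, sub_mul, mul_add, this]; noncomm_ring
  have h₂ : (X - 1) * (Y + 1) + (X * Y - 1) * (X - 1) = 0 := by
    simp only [mul_add, mul_sub, hXY, sub_mul, one_mul, mul_one]; abel
  calc _ = ((X - 1) * (∑ i ∈ range n, X ^ i) - (X * Y - 1) * (X * Y + 1)) • b -
        ((X - 1) * (Y + 1) + (X * Y - 1) * (X - 1)) • b' := by
        simp only [sub_smul _ _ b, add_smul _ _ b', smul_sub (X - 1), smul_add (X * Y - 1), mul_smul]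
        abel
    _ = 0 := by rw [h₁, h₂]; simp

theorem quaternion_exact_one (hXY : X * Y * X = Y) (hY : Y * Y = X ^ n) (hX : X ^ n * X ^ n = 1)
    (hE : ∑ i ∈ range (2 * n), X ^ i * E * X ^ (2 * n - i) = 1)
    (hFX : F * X = X * F) (hFY : F * Y + Y * F = Y) (b b' : M)
    (h₁ : (∑ i ∈ range n, X ^ i) • b - (Y + 1) • b' = 0)
    (h₂ : (X * Y + 1) • b + (X - 1) • b' = 0) :
    ∃ f : M, b = (X - 1) • f ∧ b' = (Y - 1) • f := by
  have key : ∀ i, (∑ j ∈ range i, X ^ j) • b + X ^ i • b' + (X ^ i * Y * ∑ j ∈ range i, X ^ j) • b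
      = b' := fun i => by
    induction i with
    | zero => simp
    | succ i ih =>
      have hs : X ^ (i + 1) * Y * ∑ j ∈ range (i + 1), X ^ j =
          X ^ i * Y * (∑ j ∈ range i, X ^ j) + X ^ i * (X * Y) := by
        rw [geom_sum_succ, mul_add, mul_one, ← mul_assoc, pow_succ]
        rw [mul_assoc (X ^ i) X Y, mul_assoc (X ^ i) (X * Y) X, hXY]
      have h3 := congrArg (fun m => X ^ i • m) h₂
      simp only [add_smul, sub_smul, one_smul, smul_add, smul_sub, smul_zero, ← mul_smul] at h3
      rw [hs, sum_range_succ, add_smul, add_smul, pow_succ]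
      conv_rhs => rw [← ih, ← add_zero (_ + _ + _), ← h3]
      abel
  have hu : (∑ i ∈ range n, X ^ i) • b = Y • b' + b' := by
    rw [sub_eq_zero.1 h₁, add_smul, one_smul]
  have hYu : Y • (∑ i ∈ range n, X ^ i) • b = X ^ n • b' + Y • b' := by
    rw [hu, smul_add, ← mul_smul, hY]
  have hz : (1 + X ^ n) • (∑ i ∈ range n, X ^ i) • b = 0 := by
    have h3 : Y • (1 + X ^ n) • (∑ i ∈ range n, X ^ i) • b = 0 := by
      have := key n
      rw [mul_smul, mul_smul] at this
      rw [← mul_smul, mul_one_add, ← commute_pow_of_sq_eq hY, add_smul, mul_smul, hYu]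
      rw [hYu, hu] at this
      rw [← sub_eq_zero] at this
      rw [← this]
      abel
    have h4 : (X ^ n * Y) * Y = 1 := by rw [mul_assoc, hY, hX]
    calc _ = ((X ^ n * Y) * Y) • (1 + X ^ n) • (∑ i ∈ range n, X ^ i) • b := by
          rw [h4, one_smul]
      _ = 0 := by rw [mul_smul, h3, smul_zero]
  obtain ⟨f, rfl⟩ := exists_sub_one_smul_of_norm_smul_eq_zero (m := b) hX hE (by rw [mul_smul, hz])
  have r₁ : (∑ i ∈ range n, X ^ i) * (X - 1) = (Y + 1) * (Y - 1) := by
    rw [geom_sum_mul, ← hY]; noncomm_ring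
  have r₂ : (X * Y + 1) * (X - 1) = - ((X - 1) * (Y - 1)) := by
    simp only [add_mul, mul_sub, hXY, sub_mul, one_mul, mul_one]; abel
  rw [← mul_smul, r₁, mul_smul, ← smul_sub, add_smul, one_smul] at h₁
  rw [← mul_smul, r₂, neg_smul, mul_smul, add_comm, ← sub_eq_add_neg, ← smul_sub, sub_smul,
    one_smul, sub_eq_zero] at h₂
  obtain ⟨f', hf', hf⟩ := exists_sub_one_smul_of_smul_eq_neg hFX hFY h₂ (by
    rw [← sub_eq_zero, sub_neg_eq_add, ← neg_eq_zero, ← h₁, ← sub_eq_zero]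
    simp only [smul_sub]; abel)
  refine ⟨f + f', ?_, ?_⟩
  · rw [smul_add, sub_smul X 1 f', one_smul, hf', sub_self, add_zero]
  · rw [smul_add, ← hf]; abel

theorem quaternion_exact_two (hXY : X * Y * X = Y) (hY : Y * Y = X ^ n) (hX : X ^ n * X ^ n = 1)
    (hE : ∑ i ∈ range (2 * n), X ^ i * E * X ^ (2 * n - i) = 1)
    (hFX : F * X = X * F) (hFY : F * Y + Y * F = Y) (c c' : M)
    (h : (X - 1) • c - (X * Y - 1) • c' = 0) :
    ∃ b b' : M, c = (∑ i ∈ range n, X ^ i) • b - (Y + 1) • b' ∧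
      c' = (X * Y + 1) • b + (X - 1) • b' := by
  have hNXY := norm_mul_mul hXY hY hX
  have h1 : Y • ((1 + X ^ n) * ∑ i ∈ range n, X ^ i) • c' =
      ((1 + X ^ n) * ∑ i ∈ range n, X ^ i) • c' := by
    have := congrArg (fun m => ((1 + X ^ n) * ∑ i ∈ range n, X ^ i) • m) h
    simp only [smul_sub, smul_zero, ← mul_smul] at this
    rw [mul_sub_one, norm_mul_self hX, sub_self, zero_smul, zero_sub, neg_eq_zero, mul_sub_one,
      hNXY, sub_smul, mul_smul, sub_eq_zero] at this
    exact this
  obtain ⟨φ, hφ, h2⟩ := exists_add_one_smul_of_smul_eq hFX hFY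
    (by rw [← mul_smul, self_mul_norm hX]) h1
  obtain ⟨b₀, rfl⟩ := exists_norm_smul_of_smul_eq hE hφ
  obtain ⟨b₁, hb₁⟩ := exists_sub_one_smul_of_norm_smul_eq_zero (m := c' - (X * Y + 1) • b₀) hX hE
    (by rw [smul_sub, h2, ← mul_smul, ← mul_smul, mul_add_one, hNXY, add_one_mul, sub_self])
  rw [sub_eq_iff_eq_add'] at hb₁
  have h3 : (X - 1) • (c - ((∑ i ∈ range n, X ^ i) • b₀ - (Y + 1) • b₁)) = 0 := by
    have := quaternion_comp_two hXY hY b₀ b₁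
    rw [← hb₁, ← h] at this
    rw [smul_sub, sub_left_inj.1 this, sub_self]
  rw [sub_smul, one_smul, sub_eq_zero] at h3
  obtain ⟨c₀, hc₀⟩ := exists_norm_smul_of_smul_eq hE h3
  have h4 : Y * (X ^ n * Y) = 1 := by rw [← mul_assoc, ← commute_pow_of_sq_eq hY, mul_assoc, hY, hX]
  obtain ⟨d, rfl⟩ : ∃ d, Y • d = c₀ := ⟨(X ^ n * Y) • c₀, by rw [← mul_smul, h4, one_smul]⟩
  refine ⟨b₀ - (1 - X * Y) • d, b₁ - (∑ i ∈ range n, X ^ i) • d, ?_, ?_⟩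
  · have h5 : (∑ i ∈ range n, X ^ i) * (1 - X * Y) - (Y + 1) * (∑ i ∈ range n, X ^ i) =
        - (((1 + X ^ n) * ∑ i ∈ range n, X ^ i) * Y) := by
      rw [norm_mul_of_mul_mul hXY hY hX, mul_sub, geom_sum_mul_mul_of_mul_mul hXY hX]
      noncomm_ring
    rw [sub_eq_iff_eq_add] at hc₀
    rw [hc₀]
    have h6 := congrArg (fun r : R => r • d) h5
    simp only [sub_smul _ _ d, neg_smul] at h6
    rw [mul_smul _ Y, mul_smul _ (1 - X * Y), mul_smul (Y + 1)] at h6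
    rw [smul_sub, smul_sub, ← neg_neg (((1 + X ^ n) * ∑ i ∈ range n, X ^ i) • Y • d), ← h6]
    abel
  · have h5 : (X * Y + 1) * (1 - X * Y) + (X - 1) * (∑ i ∈ range n, X ^ i) = 0 := by
      have : X * Y * (X * Y) = Y * Y := by rw [← mul_assoc, hXY]
      rw [mul_geom_sum, ← hY, add_mul, mul_sub, this]
      noncomm_ring
    have h6 := congrArg (fun r : R => r • d) h5
    simp only [add_smul _ _ d, zero_smul] at h6
    rw [mul_smul _ (1 - X * Y), mul_smul (X - 1)] at h6
    rw [hb₁, smul_sub, smul_sub, ← sub_zero (_ + _), ← h6]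
    abel

theorem quaternion_exact_three (hXY : X * Y * X = Y) (hY : Y * Y = X ^ n) (hX : X ^ n * X ^ n = 1)
    (hE : ∑ i ∈ range (2 * n), X ^ i * E * X ^ (2 * n - i) = 1)
    (hFX : F * X = X * F) (hFY : F * Y + Y * F = Y) (f : M)
    (h : (Y + 1) • ((1 + X ^ n) * ∑ i ∈ range n, X ^ i) • f = 0) :
    ∃ c c' : M, f = (X - 1) • c - (X * Y - 1) • c' := by
  have hN : X • ((1 + X ^ n) * ∑ i ∈ range n, X ^ i) • f =
     ((1 + X ^ n) * ∑ i ∈ range n, X ^ i) • f := by rw [← mul_smul, self_mul_norm hX]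
  rw [add_smul, one_smul, add_eq_zero_iff_eq_neg] at h
  obtain ⟨φ, hφ, hf⟩ := exists_sub_one_smul_of_smul_eq_neg hFX hFY hN h
  obtain ⟨c₀, rfl⟩ := exists_norm_smul_of_smul_eq hE hφ
  obtain ⟨c, hc⟩ := exists_sub_one_smul_of_norm_smul_eq_zero (m := f - (X * Y - 1) • c₀) hX hE (by
    rw [smul_sub, hf, ← mul_smul, ← mul_smul, mul_sub_one, norm_mul_mul hXY hY hX, sub_one_mul,
      sub_self])
  exact ⟨c, -c₀, by rw [← hc, smul_neg]; abel⟩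

end Quaternion

section DimensionShift

open CategoryTheory

universe u

variable {k G : Type u} [CommRing k] [Group G]

namespace Rep

/-- The image of a morphism of representations. -/
noncomputable abbrev rangeRep {A B : Rep.{u} k G} (f : A ⟶ B) : Rep.{u} k G :=
  B.subrepresentation (LinearMap.range f.hom.toLinearMap) (by
    rintro g _ ⟨a, rfl⟩
    exact ⟨A.ρ g a, hom_comm_apply f g a⟩)

/-- A morphism, with its codomain restricted to its image. -/
noncomputable def toRangeRep {A B : Rep.{u} k G} (f : A ⟶ B) : A ⟶ rangeRep f :=
  Rep.ofHom ⟨f.hom.toLinearMap.rangeRestrict, fun g => by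
    ext a
    exact hom_comm_apply f g a⟩

theorem toRangeRep_surjective {A B : Rep.{u} k G} (f : A ⟶ B) :
    Function.Surjective (toRangeRep f).hom :=
  f.hom.toLinearMap.surjective_rangeRestrict

theorem comp_toRangeRep_eq_zero {A B C : Rep.{u} k G} (i : A ⟶ B) (g : B ⟶ C)
    (h : ∀ a, g.hom (i.hom a) = 0) : i ≫ toRangeRep g = 0 :=
  Rep.hom_ext (Representation.IntertwiningMap.ext (LinearMap.ext fun a => Subtype.ext (h a)))

theorem shortExact_toRangeRep {A B C : Rep.{u} k G} (i : A ⟶ B) (g : B ⟶ C)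
    (hi : Function.Injective i.hom) (h : ∀ b, g.hom b = 0 ↔ ∃ a, i.hom a = b)
    (w : i ≫ toRangeRep g = 0) : (ShortComplex.mk i (toRangeRep g) w).ShortExact where
  exact := by
    rw [← ShortComplex.exact_map_iff_of_faithful _ (forget₂ (Rep k G) (ModuleCat k)),
      ShortComplex.moduleCat_exact_iff]
    intro b hb
    exact (h b).1 (congrArg Subtype.val hb)
  mono_f := (mono_iff_injective _).2 hi
  epi_g := (epi_iff_surjective _).2 (toRangeRep_surjective g)

open groupCohomology Limits in
/-- Third cohomology computed from the beginning of an acyclic resolution. -/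
theorem nonempty_groupCohomology_three_equiv {A J₀ J₁ J₂ J₃ : Rep.{u} k G} (i : A ⟶ J₀)
    (d₀ : J₀ ⟶ J₁) (d₁ : J₁ ⟶ J₂) (d₂ : J₂ ⟶ J₃) (hi : Function.Injective i.hom)
    (h₀ : ∀ b, d₀.hom b = 0 ↔ ∃ a, i.hom a = b) (h₁ : ∀ b, d₁.hom b = 0 ↔ ∃ a, d₀.hom a = b)
    (h₂ : ∀ b, d₂.hom b = 0 ↔ ∃ a, d₁.hom a = b)
    (hJ₀ : ∀ n, IsZero (groupCohomology J₀ (n + 1)))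
    (hJ₁ : ∀ n, IsZero (groupCohomology J₁ (n + 1)))
    (hJ₂ : ∀ n, IsZero (groupCohomology J₂ (n + 1)))
    (hinv : ∀ v ∈ J₂.ρ.invariants, d₂.hom v = 0) :
    Nonempty (groupCohomology A 3 ≃ₗ[k] (rangeRep d₂).ρ.invariants) := by
  have e₀ := shortExact_toRangeRep i d₀ hi h₀
    (comp_toRangeRep_eq_zero _ _ fun a => (h₀ _).2 ⟨a, rfl⟩)
  have e₁ := shortExact_toRangeRep (J₁.subtype _ _ : rangeRep d₀ ⟶ J₁) d₁ Subtype.val_injective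
    (fun b => (h₁ b).trans ⟨fun ⟨a, ha⟩ => ⟨⟨b, a, ha⟩, rfl⟩, fun ⟨⟨_, a, ha⟩, hb⟩ => ⟨a, ha.trans hb⟩⟩)
    (comp_toRangeRep_eq_zero _ _ fun a => (h₁ _).2 a.2)
  have e₂ := shortExact_toRangeRep (J₂.subtype _ _ : rangeRep d₁ ⟶ J₂) d₂ Subtype.val_injective
    (fun b => (h₂ b).trans ⟨fun ⟨a, ha⟩ => ⟨⟨b, a, ha⟩, rfl⟩, fun ⟨⟨_, a, ha⟩, hb⟩ => ⟨a, ha.trans hb⟩⟩)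
    (comp_toRangeRep_eq_zero _ _ fun a => (h₂ _).2 a.2)
  have := isIso_δ_of_isZero e₀ 2 (hJ₀ 1) (hJ₀ 2)
  have := isIso_δ_of_isZero e₁ 1 (hJ₁ 0) (hJ₁ 1)
  have hepi := epi_δ_of_isZero e₂ 0 (hJ₂ 0)
  have hzero : groupCohomology.map (MonoidHom.id G) (toRangeRep d₂) 0 = 0 := by
    rw [← cancel_mono (H0Iso _).hom, map_id_comp_H0Iso_hom, zero_comp]
    have : (invariantsFunctor k G).map (toRangeRep d₂) = 0 :=
      ModuleCat.hom_ext (LinearMap.ext fun v => Subtype.ext (Subtype.ext (hinv v.1 v.2)))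
    rw [this, comp_zero]
  have hmono : Mono (δ e₂ 0 1 rfl) := (mapShortComplex₃_exact e₂ rfl).mono_g hzero
  have := isIso_of_mono_of_epi (δ e₂ 0 1 rfl)
  exact ⟨((asIso (δ e₀ 2 3 rfl)).symm ≪≫ (asIso (δ e₁ 1 2 rfl)).symm ≪≫
    (asIso (δ e₂ 0 1 rfl)).symm ≪≫ H0Iso _).toLinearEquiv⟩

end Rep
end DimensionShift

section Functions

open CategoryTheory

universe u

namespace Rep

variable (k G : Type u) [CommRing k] [Group G] (B : Type u) [AddCommGroup B] [Module k B]

/-- The functions from a group to a module, with action by right translation. -/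
noncomputable abbrev funRep : Rep.{u} k G :=
  Rep.of (X := G → B)
    { toFun g := LinearMap.funLeft k B (· * g)
      map_one' := by ext; simp
      map_mul' _ _ := by ext; simp [mul_assoc, LinearMap.funLeft_apply] }

theorem funRep_ρ_apply (g h : G) (f : G → B) : (funRep k G B).ρ g f h = f (h * g) := rfl

/-- The functions on a group are coinduced from the trivial subgroup. -/
noncomputable def funRepIso :
    funRep k G B ≅ coind (⊥ : Subgroup G).subtype (trivial k (⊥ : Subgroup G) B) where
  hom := Rep.ofHom
    ⟨{ toFun f := ⟨f, fun g h => by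
         rw [Subsingleton.elim g 1, map_one, one_mul, map_one, Module.End.one_apply]⟩
       map_add' _ _ := rfl
       map_smul' _ _ := rfl }, fun _ => rfl⟩
  inv := Rep.ofHom
    ⟨{ toFun f := f.1
       map_add' _ _ := rfl
       map_smul' _ _ := rfl }, fun _ => rfl⟩
  hom_inv_id := rfl
  inv_hom_id := rfl

theorem isZero_groupCohomology_funRep (n : ℕ) :
    Limits.IsZero (groupCohomology (funRep k G B) (n + 1)) :=
  (isZero_groupCohomology_succ_of_subsingleton _ n).of_iso
    ((groupCohomology.functor k G (n + 1)).mapIso (funRepIso k G B) ≪≫ groupCohomology.coindIso _ _)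

end Rep
end Functions

section Cyclic

open CategoryTheory

/-- The annihilator of `n` in the multiplicative group of complex numbers. -/
theorem isAddCyclic_and_card_of_bijective {n : ℕ} [NeZero n] {H : Type*} [AddCommGroup H]
    (f : H → Additive ℂˣ) (hadd : ∀ x y, f (x + y) = f x + f y) (hf : Function.Injective f)
    (hr : ∀ a, n • a = 0 ↔ ∃ x, f x = a) : IsAddCyclic H ∧ Nat.card H = n := by
  let F : H →+ Additive (rootsOfUnity n ℂ) :=
    AddMonoidHom.mk' (fun x => Additive.ofMul ⟨(f x).toMul, (hr _).2 ⟨x, rfl⟩⟩) fun x y =>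
      Additive.toMul.injective (Subtype.ext (hadd x y))
  have hF : Function.Bijective F := by
    refine ⟨fun x y h => hf (congrArg (fun a : Additive (rootsOfUnity n ℂ) => a.toMul.1) h),
      fun a => ?_⟩
    obtain ⟨x, hx⟩ := (hr (Additive.ofMul a.toMul.1)).1 a.toMul.2
    exact ⟨x, Additive.toMul.injective (Subtype.ext hx)⟩
  let e := AddEquiv.ofBijective F hF
  refine ⟨isAddCyclic_of_injective F hF.1, ?_⟩
  exact (Nat.card_congr (e.toEquiv.trans Additive.toMul)).trans (Complex.card_rootsOfUnity n)

theorem isAddCyclic_groupCohomology_three_of_isCyclic (T : Type) [Group T] [Finite T]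
    [IsCyclic T] : IsAddCyclic (groupCohomology (Rep.trivial ℤ T (Additive ℂˣ)) 3) ∧
      Nat.card (groupCohomology (Rep.trivial ℤ T (Additive ℂˣ)) 3) = Nat.card T := by
  obtain ⟨g, hg⟩ := IsCyclic.exists_generator (α := T)
  let i1 : CommGroup T := IsCyclic.commGroup
  let i2 : Fintype T := Fintype.ofFinite T
  let S := Rep.FiniteCyclicGroup.subCompNormHom (Rep.trivial ℤ T (Additive ℂˣ)) g
  let π := Rep.FiniteCyclicGroup.groupCohomologyπOdd (Rep.trivial ℤ T (Additive ℂˣ)) g hg 3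
    (by decide)
  have hsurj : Function.Surjective π.hom := by
    refine (ModuleCat.epi_iff_surjective π).1 ?_
    have := epi_comp (S.homologyπ) (Rep.FiniteCyclicGroup.groupCohomologyIsoOdd
      (Rep.trivial ℤ T (Additive ℂˣ)) g hg 3 (by decide)).inv
    exact epi_comp S.moduleCatCyclesIso.inv _
  have hinj : Function.Injective π.hom := by
    rw [injective_iff_map_eq_zero]
    intro x hx
    obtain ⟨y, hy⟩ := (Rep.FiniteCyclicGroup.groupCohomologyπOdd_eq_zero_iff _ g hg 3 _ x).1 hx
    apply Subtype.ext
    rw [← hy]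
    exact sub_self y
  let e := LinearEquiv.ofBijective π.hom ⟨hinj, hsurj⟩
  refine isAddCyclic_and_card_of_bijective (fun x => (e.symm x).1) (fun x y => ?_) (fun x y h => ?_)
    fun a => ?_
  · rw [map_add]; rfl
  · exact e.symm.injective (Subtype.ext h)
  · have hnorm : (Rep.trivial ℤ T (Additive ℂˣ)).norm.hom a = Nat.card T • a := by
      simp [Rep.norm, Representation.norm]
    rw [← hnorm]
    exact ⟨fun h => ⟨e ⟨a, h⟩, by rw [e.symm_apply_apply]⟩, fun ⟨x, hx⟩ => hx ▸ (e.symm x).2⟩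

end Cyclic

section QuaternionCohomology

open CategoryTheory Finset

variable {T A : Type} [Group T] [AddCommGroup A]

/-- Left translation of functions on a group. -/
def leftTranslation (T A : Type) [Group T] [AddCommGroup A] : T →* Module.End ℤ (T → A) where
  toFun t := LinearMap.funLeft ℤ A (t⁻¹ * ·)
  map_one' := by ext; simp
  map_mul' _ _ := by ext; simp [mul_assoc, LinearMap.funLeft_apply]

theorem leftTranslation_apply (t g : T) (f : T → A) : leftTranslation T A t f g = f (t⁻¹ * g) := rfl

theorem commute_ρ_leftTranslation (h t : T) :
    Commute ((Rep.funRep ℤ T A).ρ h : Module.End ℤ (T → A)) (leftTranslation T A t) := by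
  refine LinearMap.ext fun f => funext fun g => ?_
  exact congrArg f (mul_assoc _ _ _).symm

open Classical in
/-- Restriction of functions to a set, extended by zero. -/
noncomputable def restrictTo {S : Type} (A : Type) [AddCommGroup A] (s : Set S) :
    Module.End ℤ (S → A) where
  toFun f g := if g ∈ s then f g else 0
  map_add' f f' := by ext g; by_cases h : g ∈ s <;> simp [h]
  map_smul' c f := by ext g; by_cases h : g ∈ s <;> simp [h]

open Classical in
theorem restrictTo_apply {S : Type} (s : Set S) (f : S → A) (g : S) :
    restrictTo A s f g = if g ∈ s then f g else 0 := rfl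

theorem leftTranslation_mul_restrictTo_mul (s : Set T) (t : T) :
    leftTranslation T A t * restrictTo A s * leftTranslation T A t⁻¹ =
      restrictTo A {g | t⁻¹ * g ∈ s} := by
  refine LinearMap.ext fun f => funext fun g => ?_
  simp [restrictTo_apply, leftTranslation_apply, Module.End.mul_apply]

theorem restrictTo_mul_leftTranslation (s : Set T) (t : T) :
    restrictTo A s * leftTranslation T A t =
      leftTranslation T A t * restrictTo A {g | t * g ∈ s} := by
  classical
  refine LinearMap.ext fun f => funext fun g => ?_
  simp only [Module.End.mul_apply, restrictTo_apply, leftTranslation_apply, Set.mem_ofPred_eq,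
    mul_inv_cancel_left]

variable {x y : T} {n : ℕ}

section

variable (hx : orderOf x = 2 * n) (hn : 0 < n) (hy : y ∉ Subgroup.zpowers x)
  (hT : ∀ g, g ∈ Subgroup.zpowers x ∨ y⁻¹ * g ∈ Subgroup.zpowers x) (hxy : x * y * x = y)

include hx hn hy hT hxy in
theorem existsUnique_inv_pow_mul_mem (g : T) :
    ∃! i, i ∈ range (2 * n) ∧ (x ^ i)⁻¹ * g ∈ ({1, y} : Set T) := by
  classical
  have hfin : IsOfFinOrder x := orderOf_pos_iff.1 (by lia)
  have hpow : ∀ k : ℤ, ∃ i ∈ range (2 * n), x ^ i = x ^ k := fun k => by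
    have h : x ^ k ∈ Subgroup.zpowers x := ⟨k, rfl⟩
    rw [← hfin.mem_powers_iff_mem_zpowers, hfin.mem_powers_iff_mem_range_orderOf, hx] at h
    simpa using h
  have hconj : y * x * y⁻¹ = x⁻¹ := by
    rw [mul_inv_eq_iff_eq_mul, eq_inv_mul_iff_mul_eq, ← mul_assoc, hxy]
  have hex : ∃ i ∈ range (2 * n), (x ^ i)⁻¹ * g ∈ ({1, y} : Set T) := by
    rcases hT g with ⟨k, rfl⟩ | ⟨k, hk⟩
    · obtain ⟨i, hi, h⟩ := hpow k
      exact ⟨i, hi, .inl (by rw [h]; exact inv_mul_cancel _)⟩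
    · obtain ⟨i, hi, h⟩ := hpow (-k)
      refine ⟨i, hi, .inr ?_⟩
      have h1 : y * x ^ k * y⁻¹ = x ^ (-k) := by rw [← conj_zpow, hconj, inv_zpow']
      rw [eq_inv_mul_iff_mul_eq] at hk
      rw [h, ← h1, ← hk]
      simp [mul_assoc]
  obtain ⟨i, hi, h⟩ := hex
  refine ⟨i, ⟨hi, h⟩, fun j ⟨hj, h'⟩ => ?_⟩
  have hmem : ∀ a b : T, a * g = 1 → b * g = y → a ∈ Subgroup.zpowers x →
      b ∈ Subgroup.zpowers x → False := fun a b ha hb ha' hb' => by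
    apply hy
    rw [← hb, ← inv_eq_of_mul_eq_one_right ha]
    exact mul_mem hb' (inv_mem ha')
  have hm : ∀ i : ℕ, (x ^ i)⁻¹ ∈ Subgroup.zpowers x := fun i =>
    inv_mem (pow_mem (Subgroup.mem_zpowers x) i)
  have hij : (x ^ i)⁻¹ * g = (x ^ j)⁻¹ * g := by
    rcases h with h | h <;> rcases h' with h' | h'
    · rw [h, h']
    · exact (hmem _ _ h h' (hm _) (hm _)).elim
    · exact (hmem _ _ h' h (hm _) (hm _)).elim
    · rw [h, h']
  refine pow_injOn_Iio_orderOf (x := x) ?_ ?_ (inv_injective (mul_right_cancel hij)).symm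
  · simpa [hx] using hj
  · simpa [hx] using hi

include hx hn hy hT hxy in
theorem sum_pow_mul_restrictTo_mul_pow : ∑ i ∈ range (2 * n), leftTranslation T A x ^ i *
    restrictTo A {1, y} * leftTranslation T A x ^ (2 * n - i) = 1 := by
  have h : ∀ i ∈ range (2 * n), leftTranslation T A x ^ i * restrictTo A {1, y} *
      leftTranslation T A x ^ (2 * n - i) = restrictTo A {g | (x ^ i)⁻¹ * g ∈ ({1, y} : Set T)} := by
    intro i hi
    rw [mem_range] at hi
    have hinv : x ^ (2 * n - i) = (x ^ i)⁻¹ := by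
      rw [eq_inv_iff_mul_eq_one, ← pow_add, Nat.sub_add_cancel hi.le, ← hx, pow_orderOf_eq_one]
    rw [← map_pow, ← map_pow, hinv, leftTranslation_mul_restrictTo_mul]
  rw [sum_congr rfl h]
  refine LinearMap.ext fun f => funext fun g => ?_
  obtain ⟨i, ⟨hi, hi'⟩, huniq⟩ := existsUnique_inv_pow_mul_mem hx hn hy hT hxy g
  rw [LinearMap.sum_apply, Finset.sum_apply, sum_eq_single i]
  · exact if_pos hi'
  · intro j hj hji
    rw [restrictTo_apply, if_neg]
    exact fun h => hji (huniq j ⟨hj, h⟩)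
  · exact fun h => (h hi).elim

theorem restrictTo_zpowers_mul : restrictTo A (Subgroup.zpowers x : Set T) * leftTranslation T A x
    = leftTranslation T A x * restrictTo A (Subgroup.zpowers x : Set T) := by
  rw [restrictTo_mul_leftTranslation]
  congr 2
  ext g
  exact Subgroup.mul_mem_cancel_left _ (Subgroup.mem_zpowers x)

include hy hT in
theorem mul_mem_zpowers_iff_not_mem (g : T) :
    y * g ∈ Subgroup.zpowers x ↔ g ∉ Subgroup.zpowers x := by
  refine ⟨fun h hg => hy ((Subgroup.mul_mem_cancel_right _ hg).1 h), fun hg => ?_⟩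
  exact (hT (y * g)).resolve_right (by rwa [inv_mul_cancel_left])

include hy hT in
theorem restrictTo_zpowers_mul_add :
    restrictTo A (Subgroup.zpowers x : Set T) * leftTranslation T A y +
      leftTranslation T A y * restrictTo A (Subgroup.zpowers x : Set T) =
      leftTranslation T A y := by
  rw [restrictTo_mul_leftTranslation, ← mul_add]
  convert mul_one _
  refine LinearMap.ext fun f => funext fun g => ?_
  rw [LinearMap.add_apply, Pi.add_apply, restrictTo_apply, restrictTo_apply, Set.mem_ofPred_eq,
    SetLike.mem_coe, SetLike.mem_coe, mul_mem_zpowers_iff_not_mem hy hT]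
  by_cases hg : g ∈ Subgroup.zpowers x <;> simp [hg]

include hx hy hT in
theorem card_eq_of_quaternion : Nat.card T = 2 * (2 * n) := by
  have h : (Subgroup.zpowers x).index = 2 := by
    rw [Subgroup.index_eq_two_iff']
    refine ⟨y, fun g => ?_⟩
    rw [mul_mem_zpowers_iff_not_mem hy hT]
    by_cases hg : g ∈ Subgroup.zpowers x <;> simp [hg]
  rw [← (Subgroup.zpowers x).card_mul_index, h, Nat.card_zpowers, hx, mul_comm]

end

/-- The morphism of representations on functions given by a pair of endomorphisms. -/
noncomputable def homToProd (P Q : Module.End ℤ (T → A))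
    (hP : ∀ h, Commute ((Rep.funRep ℤ T A).ρ h : Module.End ℤ (T → A)) P)
    (hQ : ∀ h, Commute ((Rep.funRep ℤ T A).ρ h : Module.End ℤ (T → A)) Q) :
    Rep.funRep ℤ T A ⟶ Rep.funRep ℤ T (A × A) :=
  Rep.ofHom
    ⟨{ toFun f g := (P f g, Q f g)
       map_add' f f' := by ext g <;> simp
       map_smul' c f := by ext g <;> simp }, fun h => LinearMap.ext fun f => funext fun g =>
      Prod.ext (congrFun (LinearMap.congr_fun (hP h).eq f) g).symm
        (congrFun (LinearMap.congr_fun (hQ h).eq f) g).symm⟩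

/-- The morphism of representations from pairs of functions given by two endomorphisms. -/
noncomputable def homFromProd (P Q : Module.End ℤ (T → A))
    (hP : ∀ h, Commute ((Rep.funRep ℤ T A).ρ h : Module.End ℤ (T → A)) P)
    (hQ : ∀ h, Commute ((Rep.funRep ℤ T A).ρ h : Module.End ℤ (T → A)) Q) :
    Rep.funRep ℤ T (A × A) ⟶ Rep.funRep ℤ T A :=
  Rep.ofHom
    ⟨{ toFun b := P (fun g => (b g).1) + Q (fun g => (b g).2)
       map_add' b b' := by
         change P ((fun g => (b g).1) + fun g => (b' g).1) +
           Q ((fun g => (b g).2) + fun g => (b' g).2) = _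
         rw [map_add, map_add, add_add_add_comm]
       map_smul' c b := by
         change P (c • fun g => (b g).1) + Q (c • fun g => (b g).2) = _
         rw [map_smul, map_smul, ← smul_add, RingHom.id_apply] },
      fun h => LinearMap.ext fun b => congrArg₂ (· + ·)
        (LinearMap.congr_fun (hP h).eq fun g => (b g).1).symm
        (LinearMap.congr_fun (hQ h).eq fun g => (b g).2).symm⟩

/-- The inclusion of the constant functions. -/
noncomputable def constHom (T A : Type) [Group T] [AddCommGroup A] :
    Rep.trivial ℤ T A ⟶ Rep.funRep ℤ T A :=
  Rep.ofHom
    ⟨{ toFun a _ := a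
       map_add' _ _ := rfl
       map_smul' _ _ := rfl }, fun _ => rfl⟩

theorem eq_const_of_mem_invariants {f : T → A} (hf : f ∈ (Rep.funRep ℤ T A).ρ.invariants) :
    f = fun _ => f 1 := by
  funext g
  have := congrFun (hf g) 1
  rwa [Rep.funRep_ρ_apply, one_mul] at this

theorem sum_leftTranslation [Fintype T] (t : T) (f : T → A) :
    ∑ g, leftTranslation T A t f g = ∑ g, f g :=
  Equiv.sum_comp (Equiv.mulLeft t⁻¹) f

theorem eq_const_of_leftTranslation_eq
    (hT : ∀ g, g ∈ Subgroup.zpowers x ∨ y⁻¹ * g ∈ Subgroup.zpowers x) {f : T → A}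
    (hx : leftTranslation T A x f = f) (hy : leftTranslation T A y f = f) : f = fun _ => f 1 := by
  let S : Subgroup T :=
    { carrier := {t | leftTranslation T A t f = f}
      mul_mem' := fun {s t} hs ht => by
        change leftTranslation T A (s * t) f = f
        rw [map_mul, Module.End.mul_apply, ht, hs]
      one_mem' := by
        change leftTranslation T A 1 f = f
        rw [map_one, Module.End.one_apply]
      inv_mem' := fun {t} ht => by
        change leftTranslation T A t⁻¹ f = f
        conv_lhs => rw [← show leftTranslation T A t f = f from ht]
        rw [← Module.End.mul_apply, ← map_mul, inv_mul_cancel, map_one, Module.End.one_apply] }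
  have hS : ∀ g, g ∈ S := fun g => by
    have hxS : Subgroup.zpowers x ≤ S := Subgroup.zpowers_le.2 hx
    exact (hT g).elim (fun h => hxS h) fun h => (S.mul_mem_cancel_left (inv_mem hy)).1 (hxS h)
  funext g
  have h := congrFun (show leftTranslation T A g f = f from hS g) g
  rw [leftTranslation_apply, inv_mul_cancel] at h
  exact h.symm

theorem isAddCyclic_groupCohomology_three_of_quaternion [Finite T]
    (hx : orderOf x = 2 * n) (hxn : x ^ n = y ^ 2) (hxy : x * y * x = y)
    (hy : y ∉ Subgroup.zpowers x)
    (hT : ∀ g, g ∈ Subgroup.zpowers x ∨ y⁻¹ * g ∈ Subgroup.zpowers x) :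
    IsAddCyclic (groupCohomology (Rep.trivial ℤ T (Additive ℂˣ)) 3) ∧
      Nat.card (groupCohomology (Rep.trivial ℤ T (Additive ℂˣ)) 3) = Nat.card T := by
  have := Fintype.ofFinite T
  have hn : 0 < n := by have := orderOf_pos x; lia
  have hc := commute_ρ_leftTranslation (T := T) (A := Additive ℂˣ)
  set X := leftTranslation T (Additive ℂˣ) x with hX_def
  set Y := leftTranslation T (Additive ℂˣ) y with hY_def
  have hXY : X * Y * X = Y := by rw [hX_def, hY_def, ← map_mul, ← map_mul, hxy]
  have hY : Y * Y = X ^ n := by rw [hX_def, hY_def, ← map_mul, ← map_pow, hxn, sq]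
  have hX : X ^ n * X ^ n = 1 := by
    rw [← pow_add, ← two_mul, ← hx, hX_def, ← map_pow, pow_orderOf_eq_one, map_one]
  have hE := sum_pow_mul_restrictTo_mul_pow (A := Additive ℂˣ) hx hn hy hT hxy
  have hFX := restrictTo_zpowers_mul (A := Additive ℂˣ) (x := x)
  have hFY := restrictTo_zpowers_mul_add (A := Additive ℂˣ) hy hT
  rw [← hX_def] at hE hFX
  rw [← hY_def] at hFY
  set N := ∑ i ∈ range n, X ^ i with hN_def
  have cX := fun h => hc h x
  have cY := fun h => hc h y
  have cN := fun h => Commute.sum_right (range n) (fun i => X ^ i) _ fun i _ => (cX h).pow_right i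
  let d₀ := homToProd (X - 1) (Y - 1) (fun h => (cX h).sub_right (.one_right _))
    (fun h => (cY h).sub_right (.one_right _))
  let d₁ := homFromProd N (-(Y + 1)) cN (fun h => ((cY h).add_right (.one_right _)).neg_right) ≫
      homToProd 1 0 (fun _ => .one_right _) (fun _ => .zero_right _) +
    homFromProd (X * Y + 1) (X - 1) (fun h => ((cX h).mul_right (cY h)).add_right (.one_right _))
      (fun h => (cX h).sub_right (.one_right _)) ≫
      homToProd 0 1 (fun _ => .zero_right _) (fun _ => .one_right _)
  let d₂ := homFromProd (X - 1) (-(X * Y - 1)) (fun h => (cX h).sub_right (.one_right _))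
    (fun h => (((cX h).mul_right (cY h)).sub_right (.one_right _)).neg_right)
  have hd₀ : ∀ f, d₀.hom f = fun g => (((X - 1) • f) g, ((Y - 1) • f) g) := fun _ => rfl
  have hd₁ : ∀ b : T → _, d₁.hom b = fun g =>
      ((N • (fun g => (b g).1) - (Y + 1) • fun g => (b g).2) g,
        ((X * Y + 1) • (fun g => (b g).1) + (X - 1) • fun g => (b g).2) g) := fun b => by
    funext g
    rw [sub_eq_add_neg, ← neg_smul]
    exact Prod.ext (add_zero _) (zero_add _)
  have hd₂ : ∀ c : T → _, d₂.hom c =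
      (X - 1) • (fun g => (c g).1) - (X * Y - 1) • fun g => (c g).2 := fun c => by
    rw [sub_eq_add_neg, ← neg_smul]
    rfl
  have hconst : ∀ (t : T) (a : Additive ℂˣ),
    (leftTranslation T (Additive ℂˣ) t) (fun _ => a) = fun _ => a := fun _ _ => rfl
  have hpair : ∀ (u v : T → Additive ℂˣ) (b : T → Additive ℂˣ × Additive ℂˣ),
      (fun g => (u g, v g)) = b ↔ (fun g => (b g).1) = u ∧ (fun g => (b g).2) = v :=
    fun u v b => by
      simp only [funext_iff, Prod.ext_iff, eq_comm, forall_and]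
  have hinv : ∀ v ∈ (Rep.funRep ℤ T (Additive ℂˣ × Additive ℂˣ)).ρ.invariants,
      d₂.hom v = 0 := fun v hv => by
    rw [hd₂, eq_const_of_mem_invariants hv, sub_smul, sub_smul, mul_smul, one_smul, one_smul]
    simp only [Module.End.smul_def, hX_def, hY_def, hconst]
    simp
  obtain ⟨e⟩ := Rep.nonempty_groupCohomology_three_equiv (constHom T (Additive ℂˣ)) d₀ d₁ d₂
    (fun a b h => congrFun h 1)
    (fun f => by
      rw [hd₀]
      constructor
      · intro h
        refine ⟨f 1, (eq_const_of_leftTranslation_eq hT ?_ ?_).symm⟩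
        · exact sub_eq_zero.1 (funext fun g => congrArg Prod.fst (congrFun h g))
        · exact sub_eq_zero.1 (funext fun g => congrArg Prod.snd (congrFun h g))
      · rintro ⟨a, rfl⟩
        funext g
        exact Prod.ext (sub_self a) (sub_self a))
    (fun b => by
      rw [hd₁]
      constructor
      · intro h
        obtain ⟨f, h₁, h₂⟩ := quaternion_exact_one hXY hY hX hE hFX hFY _ _
          (funext fun g => congrArg Prod.fst (congrFun h g))
          (funext fun g => congrArg Prod.snd (congrFun h g))
        exact ⟨f, (hpair _ _ _).2 ⟨h₁, h₂⟩⟩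
      · rintro ⟨f, rfl⟩
        obtain ⟨h₁, h₂⟩ := quaternion_comp_one hXY hY f
        exact funext fun g => Prod.ext (congrFun h₁ g) (congrFun h₂ g))
    (fun c => by
      rw [hd₂]
      constructor
      · intro h
        obtain ⟨b, b', h₁, h₂⟩ := quaternion_exact_two hXY hY hX hE hFX hFY _ _ h
        exact ⟨fun g => (b g, b' g), (hd₁ _).trans ((hpair _ _ _).2 ⟨h₁, h₂⟩)⟩
      · rintro ⟨b, rfl⟩
        rw [hd₁]
        exact quaternion_comp_two hXY hY _ _)
    (Rep.isZero_groupCohomology_funRep _ _ _) (Rep.isZero_groupCohomology_funRep _ _ _)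
    (Rep.isZero_groupCohomology_funRep _ _ _) hinv
  have : NeZero (Nat.card T) := ⟨Nat.card_pos.ne'⟩
  have heconst : ∀ h, (e h).1.1 = fun _ => (e h).1.1 1 := fun h =>
    eq_const_of_mem_invariants fun g => congrArg Subtype.val ((e h).2 g)
  refine isAddCyclic_and_card_of_bijective (fun h => (e h).1.1 1)
    (fun h h' => by rw [map_add]; rfl)
    (fun h h' hh => e.injective (Subtype.ext (Subtype.ext ?_))) fun a => ⟨fun ha => ?_, ?_⟩
  · rw [heconst, heconst h']
    exact congrArg (fun a _ => a) hh
  · obtain ⟨c, c', hcc⟩ := quaternion_exact_three hXY hY hX hE hFX hFY (fun _ : T => a) (by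
      rw [norm_eq_sum, sum_smul]
      have hpow : ∀ i, X ^ i • (fun _ : T => a) = fun _ => a := fun i => by
        rw [hX_def, ← map_pow]
        rfl
      rw [sum_congr rfl fun i _ => hpow i, sum_const, card_range, add_smul, one_smul, smul_comm]
      funext g
      change (2 * n) • a + (2 * n) • a = 0
      rw [← two_nsmul, ← mul_smul, ← card_eq_of_quaternion hx hy hT, ha])
    refine ⟨e.symm ⟨⟨fun _ => a, fun g => (c g, c' g), hcc.symm⟩, fun g => rfl⟩, ?_⟩
    rw [e.apply_symm_apply]
  · rintro ⟨h, rfl⟩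
    obtain ⟨c, hc'⟩ := (e h).1.2
    have hsum : ∑ g, (e h).1.1 g = 0 := by
      rw [← hc']
      change ∑ g, d₂.hom c g = 0
      rw [hd₂]
      simp only [sub_smul, mul_smul, one_smul, Module.End.smul_def, Pi.sub_apply, sum_sub_distrib,
        hX_def, hY_def, sum_leftTranslation, sub_self]
    rw [heconst h, sum_const, card_univ, ← Nat.card_eq_fintype_card] at hsum
    exact hsum

end QuaternionCohomology

section Transfer

open CategoryTheory

instance groupCohomology.functor_additive (k G : Type) [CommRing k] [Group G] (n : ℕ) :
    (groupCohomology.functor k G n).Additive := by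
  have : groupCohomology.functor k G n = groupCohomology.cochainsFunctor k G ⋙
    HomologicalComplex.homologyFunctor (ModuleCat k) (ComplexShape.up ℕ) n := rfl
  rw [this]
  infer_instance

namespace Subgroup

variable {G A : Type} [Group G] [AddCommGroup A]

/-- The functions on `G` invariant under left translation by `S`. -/
noncomputable abbrev coindTrivial (S : Subgroup G) (A : Type) [AddCommGroup A] : Rep ℤ G :=
  Rep.coind S.subtype (Rep.trivial ℤ S A)

theorem coindTrivial_apply_mul {S : Subgroup G} (f : S.coindTrivial A) {s : G} (hs : s ∈ S)
    (g : G) : f.1 (s * g) = f.1 g :=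
  f.2 ⟨s, hs⟩ g

theorem coindTrivial_apply_mul_of_mem_left {S : Subgroup G} (f : S.coindTrivial A) {s t : G}
    (h : s * t⁻¹ ∈ S) : f.1 s = f.1 t := by
  rw [← inv_mul_cancel_right s t, coindTrivial_apply_mul f h]

/-- The inclusion between spaces of invariant functions. -/
noncomputable def coindTrivialRes {S S' : Subgroup G} (h : S ≤ S') (A : Type) [AddCommGroup A] :
    S'.coindTrivial A ⟶ S.coindTrivial A :=
  Rep.ofHom
    ⟨{ toFun f := ⟨f.1, fun s => coindTrivial_apply_mul f (h s.2)⟩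
       map_add' _ _ := rfl
       map_smul' _ _ := rfl }, fun _ => rfl⟩

/-- The value of an invariant function at the inverse of a coset. -/
def coindTrivialCosetApply {S : Subgroup G} (S' : Subgroup G) (f : S.coindTrivial A) (g : G)
    (q : S' ⧸ S.subgroupOf S') : A :=
  Quotient.liftOn' q (fun s => f.1 ((s : G)⁻¹ * g)) fun s t h => by
    rw [QuotientGroup.leftRel_apply] at h
    apply coindTrivial_apply_mul_of_mem_left
    have h' : ((s⁻¹ * t : S') : G) ∈ S := h
    simpa [mul_assoc] using h'

theorem coindTrivialCosetApply_mul {S S' : Subgroup G} (f : S.coindTrivial A) (t : S') (g : G)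
    (q : S' ⧸ S.subgroupOf S') :
    coindTrivialCosetApply S' f (t * g) q = coindTrivialCosetApply S' f g (t⁻¹ • q) := by
  induction q using Quotient.inductionOn' with
  | h s =>
    change f.1 ((s : G)⁻¹ * (t * g)) = f.1 (((t⁻¹ * s : S') : G)⁻¹ * g)
    simp [mul_assoc]

theorem coindTrivialCosetApply_out {S S' : Subgroup G} (f : S.coindTrivial A) (g : G)
    (q : S' ⧸ S.subgroupOf S') :
    coindTrivialCosetApply S' f g q = f.1 ((q.out : G)⁻¹ * g) := by
  conv_lhs => rw [← Quotient.out_eq' q]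
  rfl

theorem coindTrivial_hom_ext {S S' : Subgroup G} {φ ψ : S.coindTrivial A ⟶ S'.coindTrivial A}
    (h : ∀ f g, (φ.hom f).1 g = (ψ.hom f).1 g) : φ = ψ :=
  Rep.hom_ext <| Representation.IntertwiningMap.ext <| LinearMap.ext fun f =>
    Subtype.ext <| funext fun g => h f g

/-- The values of a morphism, as a function of the morphism. -/
noncomputable def coindTrivialEval {S S' : Subgroup G} (f : S.coindTrivial A) (g : G) :
    (S.coindTrivial A ⟶ S'.coindTrivial A) →+ A :=
  AddMonoidHom.mk' (fun φ => (φ.hom f).1 g) fun _ _ => rfl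

theorem coindTrivialEval_apply {S S' : Subgroup G} (f : S.coindTrivial A) (g : G)
    (φ : S.coindTrivial A ⟶ S'.coindTrivial A) : coindTrivialEval f g φ = (φ.hom f).1 g := rfl

/-- The transfer between spaces of invariant functions. -/
noncomputable def coindTrivialTransfer (S S' : Subgroup G) (A : Type) [AddCommGroup A]
    [Fintype (S' ⧸ S.subgroupOf S')] : S.coindTrivial A ⟶ S'.coindTrivial A :=
  Rep.ofHom
    ⟨{ toFun f := ⟨fun g => ∑ q, coindTrivialCosetApply S' f g q, fun t g => by
         simp only [subtype_apply, coindTrivialCosetApply_mul]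
         exact Equiv.sum_comp (MulAction.toPerm t⁻¹) (coindTrivialCosetApply S' f g)⟩
       map_add' f f' := Subtype.ext <| funext fun g => by
         change ∑ q, coindTrivialCosetApply S' (f + f') g q =
           ∑ q, coindTrivialCosetApply S' f g q + ∑ q, coindTrivialCosetApply S' f' g q
         rw [← Finset.sum_add_distrib]
         simp only [coindTrivialCosetApply_out]
         rfl
       map_smul' c f := Subtype.ext <| funext fun g => by
         change ∑ q, coindTrivialCosetApply S' (c • f) g q =
           c • ∑ q, coindTrivialCosetApply S' f g q
         rw [Finset.smul_sum]
         simp only [coindTrivialCosetApply_out]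
         rfl },
      fun h => LinearMap.ext fun f => Subtype.ext <| funext fun g => by
        change ∑ q, coindTrivialCosetApply S' ((S.coindTrivial A).ρ h f) g q =
          ∑ q, coindTrivialCosetApply S' f (g * h) q
        simp only [coindTrivialCosetApply_out]
        exact Finset.sum_congr rfl fun q _ => congrArg f.1 (mul_assoc _ _ _)⟩

theorem coindTrivialTransfer_apply (S S' : Subgroup G) [Fintype (S' ⧸ S.subgroupOf S')]
    (f : S.coindTrivial A) (g : G) :
    ((coindTrivialTransfer S S' A).hom f).1 g =
      ∑ q : S' ⧸ S.subgroupOf S', f.1 ((q.out : G)⁻¹ * g) :=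
  Finset.sum_congr rfl fun q _ => coindTrivialCosetApply_out f g q

/-- Left translation of functions invariant under a central subgroup. -/
noncomputable def coindTrivialTranslate {S : Subgroup G} (hS : S ≤ center G) (A : Type)
    [AddCommGroup A] (t : G) : S.coindTrivial A ⟶ S.coindTrivial A :=
  Rep.ofHom
    ⟨{ toFun f := ⟨fun g => f.1 (t⁻¹ * g), fun s g => by
         change f.1 (t⁻¹ * (s * g)) = f.1 (t⁻¹ * g)
         rw [← mul_assoc, mem_center_iff.1 (hS s.2) t⁻¹, mul_assoc, coindTrivial_apply_mul f s.2]⟩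
       map_add' _ _ := rfl
       map_smul' _ _ := rfl },
      fun h => LinearMap.ext fun f => Subtype.ext <| funext fun g =>
        congrArg f.1 (mul_assoc _ _ _)⟩

theorem coindTrivialTranslate_comp {S : Subgroup G} (hS : S ≤ center G) (t : G) :
    coindTrivialTranslate hS A t ≫ coindTrivialTranslate hS A t⁻¹ = 𝟙 _ := by
  refine coindTrivial_hom_ext fun f g => ?_
  change f.1 (t⁻¹ * (t⁻¹⁻¹ * g)) = f.1 g
  rw [mul_inv_cancel_left]

theorem coindTrivialRes_comp_transfer {S S' : Subgroup G} [Fintype (S' ⧸ S.subgroupOf S')]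
    (h : S ≤ S') :
    coindTrivialRes h A ≫ coindTrivialTransfer S S' A = S.relIndex S' • 𝟙 (S'.coindTrivial A) := by
  refine coindTrivial_hom_ext fun f g => ?_
  refine (coindTrivialTransfer_apply S S' _ g).trans ?_
  have hq (q : S' ⧸ S.subgroupOf S') :
      ((coindTrivialRes h A).hom f).1 ((q.out : G)⁻¹ * g) = f.1 g :=
    coindTrivial_apply_mul f (inv_mem q.out.2) g
  refine (Finset.sum_congr rfl fun q _ => hq q).trans ?_
  rw [Finset.sum_const, Finset.card_univ,
    ← Nat.card_eq_fintype_card, ← coindTrivialEval_apply, map_nsmul]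
  rfl

theorem coindTrivialTransfer_comp_res {S S' Z : Subgroup G} [Fintype (S' ⧸ S.subgroupOf S')]
    (h : Z ≤ S') (h' : Z ≤ S) (hZ : Z ≤ center G) :
    coindTrivialTransfer S S' A ≫ coindTrivialRes h A = ∑ q : S' ⧸ S.subgroupOf S',
      coindTrivialRes h' A ≫ coindTrivialTranslate hZ A q.out := by
  refine coindTrivial_hom_ext fun f g => ?_
  refine (coindTrivialTransfer_apply S S' f g).trans ?_
  rw [← coindTrivialEval_apply, map_sum]
  rfl

/-- The trivial representation is coinduced from the whole group. -/
noncomputable def trivialIsoCoindTrivialTop (G A : Type) [Group G] [AddCommGroup A] :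
    Rep.trivial ℤ G A ≅ (⊤ : Subgroup G).coindTrivial A where
  hom := Rep.ofHom
    ⟨{ toFun a := ⟨fun _ => a, fun _ _ => rfl⟩
       map_add' _ _ := rfl
       map_smul' _ _ := rfl }, fun _ => rfl⟩
  inv := Rep.ofHom
    ⟨{ toFun f := f.1 1
       map_add' _ _ := rfl
       map_smul' _ _ := rfl }, fun g => LinearMap.ext fun f => by
      change f.1 (1 * g) = f.1 1
      rw [one_mul, ← mul_one g, coindTrivial_apply_mul f (mem_top g)]⟩
  hom_inv_id := rfl
  inv_hom_id := by
    refine Rep.hom_ext (Representation.IntertwiningMap.ext (LinearMap.ext fun f => Subtype.ext <|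
      funext fun g => ?_))
    change f.1 1 = f.1 g
    rw [← mul_one g, coindTrivial_apply_mul f (mem_top g)]

end Subgroup

end Transfer

theorem isAddCyclic_groupCohomology_three_of_isPGroup {T : Type} [Group T] [Finite T]
    (hT : IsPGroup 2 T) (huniq : ∃! g : T, orderOf g = 2) :
    IsAddCyclic (groupCohomology (Rep.trivial ℤ T (Additive ℂˣ)) 3) ∧
      Nat.card (groupCohomology (Rep.trivial ℤ T (Additive ℂˣ)) 3) = Nat.card T := by
  rcases hT.isCyclic_or_quaternion huniq with h | ⟨x, y, n, hx, hxn, hxy, hy, h⟩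
  · exact isAddCyclic_groupCohomology_three_of_isCyclic T
  · exact isAddCyclic_groupCohomology_three_of_quaternion hx hxn hxy hy h

theorem map_eq_self_of_injective_of_card_eq_two {Z : Type*} [AddCommGroup Z]
    (hZ : Nat.card Z = 2) (f : Z →+ Z) (hf : Function.Injective f) (z : Z) : f z = z := by
  by_cases h : z = 0
  · rw [h, map_zero]
  · exact ((Nat.card_eq_two_iff' (0 : Z)).1 hZ).unique ((map_ne_zero_iff f hf).2 h) h

theorem mem_center_of_existsUnique_orderOf_eq_two {G : Type*} [Group G]
    (huniq : ∃! g : G, orderOf g = 2) {z : G} (hz : orderOf z = 2) : z ∈ Subgroup.center G := by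
  refine Subgroup.mem_center_iff.2 fun g => ?_
  rw [← mul_inv_eq_iff_eq_mul]
  exact huniq.unique (((MulAut.conj g).orderOf_eq z).trans hz) hz

open CategoryTheory Subgroup

theorem CategoryTheory.Functor.map_sum_apply {C R ι : Type*} [Category* C] [Preadditive C] [Ring R]
    (F : C ⥤ ModuleCat R) [F.Additive] {X Y : C} (s : Finset ι) (φ : ι → (X ⟶ Y)) (x : F.obj X) :
    (F.map (∑ i ∈ s, φ i)).hom x = ∑ i ∈ s, (F.map (φ i)).hom x := by
  rw [F.map_sum, ModuleCat.hom_sum, LinearMap.sum_apply]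

set_option maxHeartbeats 400000 in
/-- If a finite group `G` has exactly one element of order 2 and `T` is a Sylow
2-subgroup, then the 2-primary component of `H³(G, ℂˣ)` (with trivial action) is
cyclic of order `|T|`. -/
theorem two_primary_third_cohomology_cyclic
    (G : Type) [Group G] [Finite G]
    (huniq : ∃! g : G, orderOf g = 2)
    (T : Sylow 2 G) :
    IsAddCyclic
      (AddCommGroup.primaryComponent
        (groupCohomology (Rep.trivial ℤ G (Additive ℂˣ)) 3) 2) ∧
    Nat.card
      (AddCommGroup.primaryComponent
        (groupCohomology (Rep.trivial ℤ G (Additive ℂˣ)) 3) 2) = Nat.card T := by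
  have : Fact (Nat.Prime 2) := ⟨Nat.prime_two⟩
  have hdvd : 2 ∣ Nat.card T := by
    obtain ⟨g, hg, -⟩ := huniq
    exact T.dvd_card_of_dvd_card (hg ▸ orderOf_dvd_natCard g)
  obtain ⟨z, hz⟩ := exists_prime_orderOf_dvd_card' 2 hdvd
  have hzG : orderOf (z : G) = 2 := by rw [Subgroup.orderOf_coe, hz]
  have huniqT : ∃! g : T, orderOf g = 2 := ⟨z, hz, fun g hg =>
    Subtype.ext (huniq.unique (by rw [Subgroup.orderOf_coe, hg]) hzG)⟩
  obtain ⟨n, hn⟩ : ∃ n, Nat.card T = 2 ^ (n + 1) := by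
    obtain ⟨n, hn⟩ := IsPGroup.iff_card.1 T.isPGroup'
    cases n with
    | zero => rw [hn] at hdvd; norm_num at hdvd
    | succ n => exact ⟨n, hn⟩
  have hZT : zpowers (z : G) ≤ T := zpowers_le.2 z.2
  have hZ : zpowers (z : G) ≤ center G :=
    zpowers_le.2 (mem_center_of_existsUnique_orderOf_eq_two huniq hzG)
  have hZcard : Nat.card (zpowers (z : G)) = 2 := by rw [Nat.card_zpowers, hzG]
  have hrel : (zpowers (z : G)).relIndex T = 2 ^ n := by
    have h := ((zpowers (z : G)).subgroupOf T).card_mul_index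
    rw [Nat.card_congr (subgroupOfEquivOfLe hZT).toEquiv, hZcard] at h
    have h' : 2 * (zpowers (z : G)).relIndex T = 2 * 2 ^ n := by rw [← pow_succ', ← hn]; exact h
    lia
  have hodd : Odd ((T : Subgroup G).relIndex ⊤) := by
    rw [relIndex_top_right, ← Nat.not_even_iff_odd, even_iff_two_dvd]
    exact T.not_dvd_index
  let F := groupCohomology.functor ℤ G 3
  let A := Additive ℂˣ
  let coh (S : Subgroup G) := groupCohomology (S.coindTrivial A) 3
  let map {S S' : Subgroup G} (φ : S.coindTrivial A ⟶ S'.coindTrivial A) : coh S →+ coh S' :=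
    (F.map φ).hom.toAddMonoidHom
  have map_comp {S S' S'' : Subgroup G} (φ : S.coindTrivial A ⟶ S'.coindTrivial A)
      (ψ : S'.coindTrivial A ⟶ S''.coindTrivial A) (x) : map ψ (map φ x) = map (φ ≫ ψ) x := by
    change _ = (F.map (φ ≫ ψ)).hom x
    rw [F.map_comp]
    rfl
  have map_id {S : Subgroup G} (x) : map (𝟙 (S.coindTrivial A)) x = x := by
    change (F.map (𝟙 _)).hom x = x
    rw [F.map_id]
    rfl
  have map_nsmul {S S' : Subgroup G} (m : ℕ) (φ : S.coindTrivial A ⟶ S'.coindTrivial A) (x) :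
      map (m • φ) x = m • map φ x := by
    change (F.map (m • φ)).hom x = _
    rw [F.map_nsmul]
    rfl
  let e : groupCohomology (Rep.trivial ℤ G A) 3 ≃ₗ[ℤ] coh ⊤ :=
    (F.mapIso (trivialIsoCoindTrivialTop G A)).toLinearEquiv
  let iso (S : Subgroup G) : coh S ≃ₗ[ℤ] groupCohomology (Rep.trivial ℤ S A) 3 :=
    (groupCohomology.coindIso (Rep.trivial ℤ S A) 3).toLinearEquiv
  obtain ⟨hcyc, hcard⟩ := isAddCyclic_groupCohomology_three_of_isPGroup T.isPGroup' huniqT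
  have : IsAddCyclic (coh T) :=
    isAddCyclic_of_injective (iso T).toAddEquiv.toAddMonoidHom (iso T).injective
  have hP : Nat.card (coh T) = 2 ^ (n + 1) :=
    (Nat.card_congr (iso T).toEquiv).trans (hcard.trans hn)
  have hZ2 : Nat.card (coh (zpowers (z : G))) = 2 :=
    (Nat.card_congr (iso _).toEquiv).trans
      ((isAddCyclic_groupCohomology_three_of_isCyclic _).2.trans hZcard)
  have hcohZ (p : coh (zpowers (z : G))) : 2 • p = 0 :=
    (congrArg (· • p) hZ2.symm).trans card_nsmul_eq_zero'
  have i₁ := Fintype.ofFinite ((⊤ : Subgroup G) ⧸ (T : Subgroup G).subgroupOf ⊤)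
  have i₂ := Fintype.ofFinite (T ⧸ (zpowers (z : G)).subgroupOf T)
  have htranslate (t : G) (p : coh (zpowers (z : G))) :
      map (coindTrivialTranslate hZ A t) p = p :=
    map_eq_self_of_injective_of_card_eq_two hZ2 _ (Function.LeftInverse.injective
      (g := map (coindTrivialTranslate hZ A t⁻¹)) fun p => by
        rw [map_comp, coindTrivialTranslate_comp, map_id]) p
  rw [hn]
  refine isAddCyclic_primaryComponent_two_of_transfer hP hodd hcohZ
    ((map (coindTrivialRes le_top A)).comp (e : _ →+ _))
    ((e.symm : _ →+ _).comp (map (coindTrivialTransfer (T : Subgroup G) ⊤ A)))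
    (map (coindTrivialRes hZT A)) (map (coindTrivialTransfer (zpowers (z : G)) (T : Subgroup G) A))
    (fun h => ?_) (fun p => ?_) (fun p => ?_)
  · change e.symm (map _ (map _ (e h))) = _
    rw [map_comp, coindTrivialRes_comp_transfer, map_nsmul, map_id, _root_.map_nsmul,
      e.symm_apply_apply]
  · rw [map_comp, coindTrivialRes_comp_transfer, map_nsmul, map_id, hrel]
  · change map _ (map _ (e (e.symm (map _ p)))) = _
    rw [e.apply_symm_apply, map_comp, map_comp]
    have hcomp : coindTrivialTransfer (T : Subgroup G) ⊤ A ≫ coindTrivialRes le_top A ≫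
        coindTrivialRes hZT A = ∑ q : (⊤ : Subgroup G) ⧸ (T : Subgroup G).subgroupOf ⊤,
          coindTrivialRes hZT A ≫ coindTrivialTranslate hZ A q.out :=
      coindTrivialTransfer_comp_res le_top hZT hZ
    rw [hcomp]
    have hq (q : (⊤ : Subgroup G) ⧸ (T : Subgroup G).subgroupOf ⊤) :
        map (coindTrivialRes hZT A ≫ coindTrivialTranslate hZ A q.out) p =
          map (coindTrivialRes hZT A) p := by
      rw [← map_comp, htranslate]
    refine (F.map_sum_apply Finset.univ _ p).trans ((Finset.sum_congr rfl fun q _ => hq q).trans ?_)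
    rw [Finset.sum_const, Finset.card_univ, ← Nat.card_eq_fintype_card]
    rfl
end
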